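/- arXiv:1301.4463 — 3 statements merged into one kernel-verified Lean document; each statement's English description precedes it below -/
import Mathlib

section
/- Let X be a real-valued Lévy process on a filtered probability space satisfying the usual conditions. Suppose that for some x > 0, X(T_x) is P-trivial on {T_x < ∞}. Then the exceptional sets can be chosen independently of the level: there exist functions g, ĝ : ℝ → ℝ and a P-null set N such that for every ω ∉ N and every x ∈ ℝ, if T_x(ω) < ∞ then X(T_x)(ω) = g(x), and if T̂_x(ω) < ∞ then X(T̂_x)(ω) = ĝ(x). -/
open MeasureTheory ProbabilityTheory Filter Set
open scoped ENNReal Topology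

/-- Left limit of a path at time `t`, with the convention `f(0-) := f(0)`
(and junk `f t` for `t < 0`). -/
noncomputable def leftLimAt (f : ℝ → ℝ) (t : ℝ) : ℝ :=
  if 0 < t then Function.leftLim f t else f t

/-- A path `f : [0,∞) → ℝ` is càdlàg: right-continuous on `[0,∞)`,
with left limits on `(0,∞)`. -/
def IsCadlag (f : ℝ → ℝ) : Prop :=
  (∀ t : ℝ, 0 ≤ t → ContinuousWithinAt f (Set.Ici t) t) ∧
  (∀ t : ℝ, 0 < t → ∃ l : ℝ, Filter.Tendsto f (nhdsWithin t (Set.Iio t)) (nhds l))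

/-- `X` is a Lévy process w.r.t. the filtration `F` under `P`, on a filtered
probability space satisfying the usual conditions. -/
structure IsLevy {Ω : Type*} {m0 : MeasurableSpace Ω} (P : Measure Ω)
    (F : MeasureTheory.Filtration ℝ m0) (X : ℝ → Ω → ℝ) : Prop where
  isProb : IsProbabilityMeasure P
  complete : P.IsComplete
  rightCont : ∀ t : ℝ, F t = ⨅ s : Set.Ioi t, F (s : ℝ)
  nullF0 : ∀ N : Set Ω, P N = 0 → MeasurableSet[F 0] N
  adapted : ∀ t : ℝ, Measurable[F t] (X t)
  start : P {ω | X 0 ω = 0} = 1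
  cadlag : ∀ᵐ ω ∂P, IsCadlag (fun t => X t ω)
  indep : ∀ s t : ℝ, 0 ≤ s → s ≤ t →
    ProbabilityTheory.Indep
      (MeasurableSpace.comap (fun ω => X t ω - X s ω) inferInstance) (F s) P
  statInc : ∀ s t : ℝ, 0 ≤ s → s ≤ t →
    Measure.map (fun ω => X t ω - X s ω) P = Measure.map (X (t - s)) P

/-- First passage time `T_x = inf{t ≥ 0 : X_t ≥ x}` (valued in `[0,∞]`, `inf ∅ = ∞`). -/
noncomputable def hitT {Ω : Type*} (X : ℝ → Ω → ℝ) (x : ℝ) (ω : Ω) : ℝ≥0∞ :=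
  sInf ((fun t : ℝ => ENNReal.ofReal t) '' {t : ℝ | 0 ≤ t ∧ x ≤ X t ω})

/-- First passage time `T̂_x = inf{t ≥ 0 : X_t > x}`. -/
noncomputable def hitThat {Ω : Type*} (X : ℝ → Ω → ℝ) (x : ℝ) (ω : Ω) : ℝ≥0∞ :=
  sInf ((fun t : ℝ => ENNReal.ofReal t) '' {t : ℝ | 0 ≤ t ∧ x < X t ω})

/-- `X(T_x)`, the position at the first passage time (junk if `T_x = ∞`). -/
noncomputable def stopVal {Ω : Type*} (X : ℝ → Ω → ℝ) (x : ℝ) (ω : Ω) : ℝ :=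
  X (hitT X x ω).toReal ω

/-- `X(T̂_x)`. -/
noncomputable def stopValHat {Ω : Type*} (X : ℝ → Ω → ℝ) (x : ℝ) (ω : Ω) : ℝ :=
  X (hitThat X x ω).toReal ω

/-- `Q^x(B) = P({X(T_x) ∈ B} ∩ {T_x < ∞})`. -/
noncomputable def Qfun {Ω : Type*} {m0 : MeasurableSpace Ω} (P : Measure Ω)
    (X : ℝ → Ω → ℝ) (x : ℝ) (B : Set ℝ) : ℝ≥0∞ :=
  P ({ω | stopVal X x ω ∈ B} ∩ {ω | hitT X x ω < ⊤})

/-- Running supremum `X̄_t = sup{X_s : s ∈ [0,t]}`. -/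
noncomputable def runSup {Ω : Type*} (X : ℝ → Ω → ℝ) (t : ℝ) (ω : Ω) : ℝ :=
  sSup ((fun s => X s ω) '' Set.Icc 0 t)

open scoped NNRat

noncomputable def ovV (a : ℝ) (p : ℚ≥0 → ℝ) : EReal :=
  ⨅ (q : ℚ≥0) (_ : a < p q), ⨆ (s : ℚ≥0) (_ : s ≤ q), (p s : EReal)

lemma ovV_lt_iff {a : ℝ} {p : ℚ≥0 → ℝ} {b : EReal} :
    ovV a p < b ↔ ∃ q : ℚ≥0, a < p q ∧ (⨆ (s : ℚ≥0) (_ : s ≤ q), (p s : EReal)) < b := by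
  unfold ovV
  simp only [iInf_lt_iff, exists_prop]

lemma ovV_mono {a w : ℝ} (h : a ≤ w) (p : ℚ≥0 → ℝ) : ovV a p ≤ ovV w p := by
  unfold ovV
  exact le_iInf₂ fun q hq => iInf₂_le q (h.trans_lt hq)

lemma ovV_ge (a : ℝ) (p : ℚ≥0 → ℝ) : (a : EReal) ≤ ovV a p := by
  unfold ovV
  refine le_iInf₂ fun q hq => ?_
  refine le_trans (EReal.coe_le_coe_iff.2 hq.le) ?_
  exact le_iSup₂ (f := fun (s : ℚ≥0) (_ : s ≤ q) => (p s : EReal)) q le_rfl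

lemma ovV_gap {a w : ℝ} {p : ℚ≥0 → ℝ} (h : a ≤ w) (hw : (w : EReal) < ovV a p) :
    ovV w p = ovV a p := by
  refine le_antisymm ?_ (ovV_mono h p)
  conv_rhs => unfold ovV
  refine le_iInf₂ fun q hq => ?_
  have h1 : (w : EReal) < ⨆ (s : ℚ≥0) (_ : s ≤ q), (p s : EReal) :=
    lt_of_lt_of_le hw (by unfold ovV; exact iInf₂_le q hq)
  simp only [lt_iSup_iff, exists_prop] at h1
  obtain ⟨s, hs, hws⟩ := h1
  refine le_trans (b := ⨆ (s' : ℚ≥0) (_ : s' ≤ s), (p s' : EReal)) ?_ ?_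
  · unfold ovV
    exact iInf₂_le s (EReal.coe_lt_coe_iff.1 hws)
  · exact iSup₂_le fun s' hs' =>
      le_iSup₂ (f := fun (s : ℚ≥0) (_ : s ≤ q) => (p s : EReal)) s' (hs'.trans hs)

lemma ovV_right {a : ℝ} {p : ℚ≥0 → ℝ} {b : EReal} (h : ovV a p < b) :
    ∃ c : ℝ, a < c ∧ ∀ w, w < c → ovV w p < b := by
  rw [ovV_lt_iff] at h
  obtain ⟨q, hq, hb⟩ := h
  exact ⟨p q, hq, fun w hw => ovV_lt_iff.2 ⟨q, hw, hb⟩⟩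

lemma ovV_measurable (a : ℝ) : Measurable (ovV a) := by
  unfold ovV
  refine Measurable.iInf fun q => ?_
  have : ∀ p : ℚ≥0 → ℝ, (⨅ (_ : a < p q), ⨆ (s : ℚ≥0) (_ : s ≤ q), (p s : EReal))
      = if a < p q then ⨆ (s : ℚ≥0) (_ : s ≤ q), (p s : EReal) else ⊤ := by
    intro p; split_ifs with h <;> simp [h]
  simp only [this]
  refine Measurable.ite (measurableSet_lt measurable_const (measurable_pi_apply q)) ?_
    measurable_const
  exact Measurable.iSup fun s => Measurable.iSup fun _ =>
    measurable_coe_real_ereal.comp (measurable_pi_apply s)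

def rp (f : ℝ → ℝ) : ℚ≥0 → ℝ := fun q => f (q : ℝ)

structure IsHit (f : ℝ → ℝ) (a τ : ℝ) : Prop where
  nonneg : 0 ≤ τ
  before : ∀ s, 0 ≤ s → s < τ → f s ≤ a
  after : ∀ ε, 0 < ε → ∃ t, τ ≤ t ∧ t < τ + ε ∧ a < f t

lemma isHit_sInf {f : ℝ → ℝ} {a : ℝ} (h : ({t : ℝ | 0 ≤ t ∧ a < f t}).Nonempty) :
    IsHit f a (sInf {t : ℝ | 0 ≤ t ∧ a < f t}) := by
  have hb : BddBelow {t : ℝ | 0 ≤ t ∧ a < f t} := ⟨0, fun t ht => ht.1⟩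
  refine ⟨Real.sInf_nonneg fun t ht => ht.1, ?_, ?_⟩
  · intro s hs hlt
    by_contra hc
    exact absurd (csInf_le hb (show s ∈ {t : ℝ | 0 ≤ t ∧ a < f t} from ⟨hs, not_le.1 hc⟩))
      (not_le.2 hlt)
  · intro ε hε
    obtain ⟨t, ht, hlt⟩ := exists_lt_of_csInf_lt h (lt_add_of_pos_right _ hε)
    exact ⟨t, csInf_le hb ht, hlt, ht.2⟩

lemma rc_ev {f : ℝ → ℝ} (hf : IsCadlag f) {t : ℝ} (ht : 0 ≤ t) {U : Set ℝ} (hU : IsOpen U)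
    (h : f t ∈ U) : ∃ δ > 0, ∀ s, t ≤ s → s < t + δ → f s ∈ U := by
  have h1 := hf.1 t ht (hU.mem_nhds h)
  rw [Filter.mem_map, mem_nhdsWithin_iff_exists_mem_nhds_inter] at h1
  obtain ⟨u, hu, hsub⟩ := h1
  obtain ⟨δ, hδ, hball⟩ := Metric.mem_nhds_iff.1 hu
  refine ⟨δ, hδ, fun s hs hs' => hsub ⟨hball ?_, hs⟩⟩
  rw [Metric.mem_ball, Real.dist_eq, abs_of_nonneg (by linarith)]; linarith

lemma exists_nnrat {a b : ℝ} (ha : 0 ≤ a) (h : a < b) : ∃ q : ℚ≥0, a < (q : ℝ) ∧ (q : ℝ) < b := by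
  obtain ⟨q, h1, h2⟩ := exists_rat_btwn h
  have hq : (0 : ℚ) ≤ q := by exact_mod_cast (ha.trans h1.le)
  refine ⟨⟨q, hq⟩, ?_, ?_⟩
  · exact_mod_cast h1
  · exact_mod_cast h2

lemma IsHit.ge {f : ℝ → ℝ} {a τ : ℝ} (hf : IsCadlag f) (h : IsHit f a τ) : a ≤ f τ := by
  by_contra hc
  obtain ⟨δ, hδ, H⟩ := rc_ev hf h.nonneg isOpen_Iio (show f τ ∈ Iio a from not_le.1 hc)
  obtain ⟨t, h1, h2, h3⟩ := h.after δ hδ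
  exact absurd (H t h1 h2) (not_lt.2 h3.le)

lemma IsHit.ovV_eq {f : ℝ → ℝ} {a τ : ℝ} (hf : IsCadlag f) (h : IsHit f a τ) :
    ovV a (rp f) = f τ := by
  apply le_antisymm
  · refine le_of_forall_gt fun c hc => ?_
    induction c with
    | bot => simp at hc
    | top =>
      obtain ⟨δ, hδ, H⟩ := rc_ev hf h.nonneg isOpen_Iio (show f τ ∈ Iio (f τ + 1) by simp)
      obtain ⟨t, h1, h2, h3⟩ := h.after δ hδ
      obtain ⟨δ', hδ', H'⟩ := rc_ev hf (h.nonneg.trans h1) isOpen_Ioi (show f t ∈ Ioi a from h3)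
      obtain ⟨q, hq1, hq2⟩ := exists_nnrat (h.nonneg.trans h1)
        (show t < min (t + δ') (τ + δ) from lt_min (by linarith) h2)
      rw [ovV_lt_iff]
      refine ⟨q, H' _ hq1.le (hq2.trans_le (min_le_left _ _)), ?_⟩
      refine lt_of_le_of_lt (iSup₂_le (a := ((f τ + 1 : ℝ) : EReal)) ?_) (EReal.coe_lt_top _)
      intro s hs
      rw [EReal.coe_le_coe_iff]
      rcases lt_or_ge (s : ℝ) τ with h4 | h4
      · have := h.before s (by positivity) h4
        have := h.ge hf
        simp only [rp]; linarith
      · exact le_of_lt (H s h4 (lt_of_le_of_lt (by exact_mod_cast hs)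
          (hq2.trans_le (min_le_right _ _))))
    | coe c =>
      have hc' := EReal.coe_lt_coe_iff.1 hc
      obtain ⟨c', hc1, hc2⟩ := exists_between hc'
      obtain ⟨δ, hδ, H⟩ := rc_ev hf h.nonneg isOpen_Iio (show f τ ∈ Iio c' from hc1)
      obtain ⟨t, h1, h2, h3⟩ := h.after δ hδ
      obtain ⟨δ', hδ', H'⟩ := rc_ev hf (h.nonneg.trans h1) isOpen_Ioi (show f t ∈ Ioi a from h3)
      obtain ⟨q, hq1, hq2⟩ := exists_nnrat (h.nonneg.trans h1)
        (show t < min (t + δ') (τ + δ) from lt_min (by linarith) h2)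
      rw [ovV_lt_iff]
      refine ⟨q, H' _ hq1.le (hq2.trans_le (min_le_left _ _)), ?_⟩
      refine lt_of_le_of_lt (iSup₂_le (a := (c' : EReal)) ?_) (EReal.coe_lt_coe_iff.2 hc2)
      intro s hs
      rw [EReal.coe_le_coe_iff]
      rcases lt_or_ge (s : ℝ) τ with h4 | h4
      · have := h.before s (by positivity) h4
        have := h.ge hf
        simp only [rp]; linarith
      · exact le_of_lt (H s h4 (lt_of_le_of_lt (by exact_mod_cast hs)
          (hq2.trans_le (min_le_right _ _))))
  · unfold ovV
    refine le_iInf₂ fun q hq => ?_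
    have hτq : τ ≤ (q : ℝ) := by
      by_contra hc
      exact absurd (h.before q (by positivity) (not_le.1 hc)) (not_le.2 hq)
    rcases hτq.eq_or_lt with he | hl
    · rw [he]
      exact le_iSup₂ (f := fun (s : ℚ≥0) (_ : s ≤ q) => (rp f s : EReal)) q le_rfl
    · refine le_of_forall_lt fun c hc => ?_
      induction c with
      | top => simp at hc
      | bot =>
        refine lt_of_lt_of_le (EReal.bot_lt_coe (rp f q)) ?_
        exact le_iSup₂ (f := fun (s : ℚ≥0) (_ : s ≤ q) => (rp f s : EReal)) q le_rfl
      | coe c =>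
        obtain ⟨δ, hδ, H⟩ := rc_ev hf h.nonneg isOpen_Ioi
          (show f τ ∈ Ioi c from EReal.coe_lt_coe_iff.1 hc)
        obtain ⟨s, hs1, hs2⟩ := exists_nnrat h.nonneg
          (show τ < min (q : ℝ) (τ + δ) from lt_min hl (by linarith))
        refine lt_of_lt_of_le (EReal.coe_lt_coe_iff.2
          (show c < rp f s from H s hs1.le (hs2.trans_le (min_le_right _ _)))) ?_
        refine le_iSup₂ (f := fun (s : ℚ≥0) (_ : s ≤ q) => (rp f s : EReal)) s ?_
        exact_mod_cast (hs2.trans_le (min_le_left _ _)).le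

lemma ovV_eq_top {f : ℝ → ℝ} {a : ℝ} (h : ∀ t, 0 ≤ t → f t ≤ a) : ovV a (rp f) = ⊤ := by
  unfold ovV
  refine iInf₂_eq_top.2 fun q hq => ?_
  exact absurd (h q (by positivity)) (not_le.2 hq)

lemma hit_or (f : ℝ → ℝ) (a : ℝ) :
    (∀ t, 0 ≤ t → f t ≤ a) ∨ IsHit f a (sInf {t : ℝ | 0 ≤ t ∧ a < f t}) := by
  by_cases h : ({t : ℝ | 0 ≤ t ∧ a < f t}).Nonempty
  · exact Or.inr (isHit_sInf h)
  · left
    intro t ht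
    by_contra hc
    exact h ⟨t, ht, not_le.1 hc⟩

lemma isHit_of_ne_top {f : ℝ → ℝ} {a : ℝ} (h : ovV a (rp f) ≠ ⊤) :
    IsHit f a (sInf {t : ℝ | 0 ≤ t ∧ a < f t}) :=
  (hit_or f a).resolve_left fun h' => h (ovV_eq_top h')

lemma ovV_ne_top_of {f : ℝ → ℝ} {a t : ℝ} (hf : IsCadlag f) (ht : 0 ≤ t) (h : a < f t) :
    ovV a (rp f) ≠ ⊤ := by
  rw [(isHit_sInf ⟨t, ht, h⟩).ovV_eq hf]
  exact EReal.coe_ne_top _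

def shiftPath (f : ℝ → ℝ) (τ : ℝ) : ℝ → ℝ := fun t => f (τ + t) - f τ

lemma shift_cadlag {f : ℝ → ℝ} {τ : ℝ} (hf : IsCadlag f) (hτ : 0 ≤ τ) :
    IsCadlag (shiftPath f τ) := by
  constructor
  · intro t ht
    have h1 := hf.1 (τ + t) (by linarith)
    refine ContinuousWithinAt.sub ?_ continuousWithinAt_const
    refine ContinuousWithinAt.comp (t := Ici (τ + t)) h1
      (Continuous.continuousWithinAt (by fun_prop)) ?_
    intro s hs
    simp only [mem_Ici] at hs ⊢; linarith
  · intro t ht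
    obtain ⟨l, hl⟩ := hf.2 (τ + t) (by linarith)
    refine ⟨l - f τ, Tendsto.sub_const (hl.comp ?_) _⟩
    refine tendsto_nhdsWithin_of_tendsto_nhds_of_eventually_within _ ?_ ?_
    · exact (Continuous.tendsto (by fun_prop : Continuous fun s : ℝ => τ + s) t).mono_left
        nhdsWithin_le_nhds
    · filter_upwards [self_mem_nhdsWithin] with s hs
      simp only [mem_Iio] at hs ⊢; linarith

lemma ovV_shift {f : ℝ → ℝ} {a τ w : ℝ} (hf : IsCadlag f) (h : IsHit f a τ) (hw : 0 ≤ w) :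
    ovV (f τ + w) (rp f) = (f τ : EReal) + ovV w (rp (shiftPath f τ)) := by
  have hge := h.ge hf
  rcases hit_or (shiftPath f τ) w with h1 | h1
  · rw [ovV_eq_top h1, ovV_eq_top]
    · exact (EReal.coe_add_top _).symm
    · intro t ht
      rcases lt_or_ge t τ with h2 | h2
      · have := h.before t ht h2
        linarith
      · have := h1 (t - τ) (by linarith)
        simp only [shiftPath, add_sub_cancel] at this
        linarith
  · rw [h1.ovV_eq (shift_cadlag hf h.nonneg)]
    set σ := sInf {t : ℝ | 0 ≤ t ∧ w < shiftPath f τ t}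
    have h2 : IsHit f (f τ + w) (τ + σ) := by
      refine ⟨by linarith [h.nonneg, h1.nonneg], ?_, ?_⟩
      · intro s hs hlt
        rcases lt_or_ge s τ with h2 | h2
        · have := h.before s hs h2
          linarith
        · have := h1.before (s - τ) (by linarith) (by linarith)
          simp only [shiftPath, add_sub_cancel] at this
          linarith
      · intro ε hε
        obtain ⟨t, h3, h4, h5⟩ := h1.after ε hε
        refine ⟨τ + t, by linarith, by linarith, ?_⟩
        simp only [shiftPath] at h5; linarith
    rw [h2.ovV_eq hf, ← EReal.coe_add]
    simp [shiftPath]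

def TrL (L : Measure (ℚ≥0 → ℝ)) (x r : ℝ) : Prop :=
  ∀ᵐ p ∂L, ∀ w : ℚ≥0, (w : ℝ) < x → ovV w p < x ∨ ovV w p = r ∨ ovV w p = ⊤

def ConstL (L : Measure (ℚ≥0 → ℝ)) (a v : ℝ) : Prop :=
  ∀ᵐ p ∂L, ovV a p = v ∨ ovV a p = ⊤

lemma TrL.real {L : Measure (ℚ≥0 → ℝ)} {x r : ℝ} (h : TrL L x r) {w : ℝ} (hw0 : 0 ≤ w)
    (hw : w < x) : ∀ᵐ p ∂L, ovV w p < x ∨ ovV w p = r ∨ ovV w p = ⊤ := by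
  filter_upwards [h] with p hp
  by_cases hx : ovV w p < x
  · exact Or.inl hx
  obtain ⟨q, h1, h2⟩ := exists_nnrat hw0 hw
  have := ovV_gap (p := p) h1.le (lt_of_lt_of_le (EReal.coe_lt_coe_iff.2 h2) (not_lt.1 hx))
  rw [← this]
  exact hp q h2

lemma coe_of_lt {a c : ℝ} {p : ℚ≥0 → ℝ} (h : ovV a p < c) :
    ∃ z : ℝ, ovV a p = z ∧ a ≤ z ∧ z < c := by
  have h1 := ovV_ge a p
  have h2 : ovV a p ≠ ⊤ := ne_top_of_lt h
  have h3 : ovV a p ≠ ⊥ := ne_bot_of_le_ne_bot (EReal.coe_ne_bot a) h1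
  have h4 := EReal.coe_toReal h2 h3
  rw [← h4] at h h1
  exact ⟨_, h4.symm, EReal.coe_le_coe_iff.1 h1, EReal.coe_lt_coe_iff.1 h⟩

/-- descent step -/
lemma descent {L : Measure (ℚ≥0 → ℝ)}
    (hD : ∀ a x r : ℝ, 0 ≤ a → TrL L x r → ∀ᵐ p ∂L, ∀ z : ℝ, ovV a p = z → z < x →
      TrL L (x - z) (r - z))
    {a m ε x r : ℝ} (ha : 0 ≤ a) (hm : ∀ᵐ p ∂L, (m : EReal) ≤ ovV a p)
    (hε : ¬ ∀ᵐ p ∂L, (ε : EReal) ≤ ovV a p) (hx : ε ≤ x) (h : TrL L x r) :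
    ∃ z, a ≤ z ∧ m ≤ z ∧ z < ε ∧ TrL L (x - z) (r - z) := by
  by_contra hc
  push Not at hc
  apply hε
  filter_upwards [hm, hD a x r ha h] with p h1 h2
  by_contra h3
  obtain ⟨z, hz, haz, hzε⟩ := coe_of_lt (not_le.1 h3)
  rw [hz, EReal.coe_le_coe_iff] at h1
  exact hc z haz h1 hzε (h2 z hz (by linarith))

lemma main_abs (L : Measure (ℚ≥0 → ℝ))
    (hD : ∀ a x r : ℝ, 0 ≤ a → TrL L x r → ∀ᵐ p ∂L, ∀ z : ℝ, ovV a p = z → z < x →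
      TrL L (x - z) (r - z))
    (hU : ∀ a v w u : ℝ, 0 ≤ a → a ≤ v → 0 ≤ w → ConstL L a v → ConstL L w u → ConstL L (v + w) (v + u))
    {x r : ℝ} (hx : 0 < x) (h : TrL L x r) :
    (∀ a, 0 ≤ a → ConstL L a a) ∨
    ∃ m : ℝ, 0 < m ∧ ∀ a, 0 ≤ a → ConstL L a (m * (⌊a / m⌋ + 1)) := by
  by_cases h0 : ∀ᵐ p ∂L, ovV 0 p = ⊤
  · left
    intro a ha
    filter_upwards [h0] with p hp
    right
    exact top_le_iff.1 (hp ▸ ovV_mono ha p)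
  by_cases hI : ∀ ε : ℝ, 0 < ε → ¬ ∀ᵐ p ∂L, (ε : EReal) ≤ ovV 0 p
  · left
    have small : ∀ ε : ℝ, 0 < ε → ∃ w : ℝ, 0 < w ∧ ∀ x r, ε ≤ x → TrL L x r →
        ∃ z, w ≤ z ∧ z < ε ∧ TrL L (x - z) (r - z) := by
      intro ε hε
      have : ∃ n : ℕ, ¬ ∀ᵐ p ∂L, (ε : EReal) ≤ ovV (1 / ((n : ℝ) + 1)) p := by
        by_contra hc
        push Not at hc
        apply hI ε hε
        filter_upwards [ae_all_iff.2 hc] with p hp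
        by_contra h1
        obtain ⟨c, hc0, hc1⟩ := ovV_right (not_le.1 h1)
        obtain ⟨n, hn⟩ := exists_nat_one_div_lt hc0
        exact absurd (hc1 _ hn) (not_lt.2 (hp n))
      obtain ⟨n, hn⟩ := this
      refine ⟨1 / ((n : ℝ) + 1), by positivity, fun x r hx hT => ?_⟩
      obtain ⟨z, h1, -, h3, h4⟩ := descent hD (a := 1 / ((n : ℝ) + 1)) (by positivity)
        (Eventually.of_forall fun p => ovV_ge _ p) hn hx hT
      exact ⟨z, h1, h3, h4⟩
    have hG : TrL L x x := by
      by_cases hrx : r ≤ x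
      · filter_upwards [h] with p hp w hw
        rcases hp w hw with h1 | h1 | h1
        · exact Or.inl h1
        · rcases hrx.eq_or_lt with h2 | h2
          · exact Or.inr (Or.inl (h2 ▸ h1))
          · left; rw [h1]; exact EReal.coe_lt_coe_iff.2 h2
        · exact Or.inr (Or.inr h1)
      push Not at hrx
      unfold TrL
      rw [ae_all_iff]
      intro w
      by_cases hw : (w : ℝ) < x
      swap
      · exact Eventually.of_forall fun p h => absurd h hw
      have hw0 : (0 : ℝ) ≤ w := by positivity
      obtain ⟨w', hw', hs⟩ := small (min (x - w) (r - x)) (lt_min (by linarith) (by linarith))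
      obtain ⟨z, hz1, hz2, hz3⟩ := hs x r ((min_le_left _ _).trans (by linarith)) h
      have hz4 := hz2.trans_le (min_le_left _ _)
      have hz5 := hz2.trans_le (min_le_right _ _)
      filter_upwards [h, hz3] with p h1 h2 _
      rcases h1 w hw with h3 | h3 | h3
      · exact Or.inl h3
      · rcases h2 w (by linarith) with h4 | h4 | h4
        · rw [h3, EReal.coe_lt_coe_iff] at h4; linarith
        · rw [h3, EReal.coe_eq_coe_iff] at h4; linarith
        · exact Or.inr (Or.inr h4)
      · exact Or.inr (Or.inr h3)
    have h2 : ∀ a, 0 ≤ a → a < x → ConstL L a a := by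
      intro a ha hax
      have : ∀ n : ℕ, ∀ᵐ p ∂L, ovV a p ≤ ((a + 1 / ((n : ℝ) + 1) : ℝ) : EReal) ∨ ovV a p = ⊤ := by
        intro n
        by_contra hb
        set δ := 1 / ((n : ℝ) + 1) with hδ
        have hδ0 : 0 < δ := by positivity
        obtain ⟨w, hw, hs⟩ := small δ hδ0
        have key : ∀ k : ℕ, ∀ u, a < u → u ≤ a + δ + k * w → ¬ TrL L u u := by
          intro k
          have base : ∀ u, a < u → u ≤ a + δ → ¬ TrL L u u := by
            intro u hu1 hu2 hT
            apply hb
            filter_upwards [hT.real ha hu1] with p hp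
            rcases hp with h1 | h1 | h1
            · exact Or.inl (h1.le.trans (EReal.coe_le_coe_iff.2 hu2))
            · exact Or.inl (h1.le.trans (EReal.coe_le_coe_iff.2 hu2))
            · exact Or.inr h1
          induction k with
          | zero => intro u h1 h2; exact base u h1 (by simpa using h2)
          | succ k ih =>
            intro u h1 h2 hT
            by_cases h3 : u ≤ a + δ
            · exact base u h1 h3 hT
            · push Not at h3
              obtain ⟨z, hz1, hz2, hz3⟩ := hs u u (by linarith) hT
              push_cast at h2
              exact ih (u - z) (by linarith) (by linarith) hz3
        obtain ⟨k, hk⟩ := exists_nat_gt (x / w)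
        rw [div_lt_iff₀ hw] at hk
        exact key k x hax (by linarith) hG
      filter_upwards [ae_all_iff.2 this] with p hp
      by_cases ht : ovV a p = ⊤
      · exact Or.inr ht
      left
      refine le_antisymm ?_ (ovV_ge a p)
      by_contra hc
      obtain ⟨c, hc1, hc2⟩ := EReal.exists_between_coe_real (not_le.1 hc)
      obtain ⟨n, hn⟩ := exists_nat_one_div_lt (sub_pos.2 (EReal.coe_lt_coe_iff.1 hc1))
      have h3 := (hp n).resolve_right ht
      have h4 := EReal.coe_lt_coe_iff.1 (hc2.trans_le h3)
      linarith
    have h3 : ∀ n : ℕ, ∀ a, 0 ≤ a → a < x / 2 * (n + 1) → ConstL L a a := by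
      intro n
      induction n with
      | zero => intro a ha hlt; simp at hlt; exact h2 a ha (by linarith)
      | succ n ih =>
        intro a ha hlt
        push_cast at hlt
        by_cases hax : a < x
        · exact h2 a ha hax
        · have := hU (x / 2) (x / 2) (a - x / 2) (a - x / 2) (by linarith) le_rfl (by linarith)
            (h2 _ (by linarith) (by linarith)) (ih _ (by linarith) (by linarith))
          simpa using this
    intro a ha
    obtain ⟨n, hn⟩ := exists_nat_gt (a / (x / 2))
    rw [div_lt_iff₀ (by linarith)] at hn
    exact h3 n a ha (by linarith)
  · right
    push Not at hI
    obtain ⟨ε0, hε0, hε1⟩ := hI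
    set S : Set ℝ := {ε | ∀ᵐ p ∂L, (ε : EReal) ≤ ovV 0 p} with hS
    have hSb : BddAbove S := by
      by_contra hb
      apply h0
      have : ∀ n : ℕ, ∀ᵐ p ∂L, ((n : ℝ) : EReal) ≤ ovV 0 p := by
        intro n
        rw [not_bddAbove_iff] at hb
        obtain ⟨y, hy, hny⟩ := hb n
        filter_upwards [hy] with p hp
        exact (EReal.coe_le_coe_iff.2 hny.le).trans hp
      filter_upwards [ae_all_iff.2 this] with p hp
      rw [EReal.eq_top_iff_forall_lt]
      intro y
      obtain ⟨n, hn⟩ := exists_nat_gt y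
      exact (EReal.coe_lt_coe_iff.2 hn).trans_le (hp n)
    set m := sSup S with hm
    have hm0 : 0 < m := hε0.trans_le (le_csSup hSb hε1)
    have hmS : ∀ᵐ p ∂L, (m : EReal) ≤ ovV 0 p := by
      have : ∀ n : ℕ, ∀ᵐ p ∂L, ((m - 1 / ((n : ℝ) + 1) : ℝ) : EReal) ≤ ovV 0 p := by
        intro n
        obtain ⟨y, hy, hlt⟩ := exists_lt_of_lt_csSup ⟨ε0, hε1⟩
          (show m - 1 / ((n : ℝ) + 1) < sSup S by
            have : 0 < 1 / ((n : ℝ) + 1) := by positivity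
            linarith)
        filter_upwards [hy] with p hp
        exact (EReal.coe_le_coe_iff.2 hlt.le).trans hp
      filter_upwards [ae_all_iff.2 this] with p hp
      by_contra hc
      obtain ⟨c, hc1, hc2⟩ := EReal.exists_between_coe_real (not_le.1 hc)
      obtain ⟨n, hn⟩ := exists_nat_one_div_lt (sub_pos.2 (EReal.coe_lt_coe_iff.1 hc2))
      have h4 := EReal.coe_lt_coe_iff.1 ((hp n).trans_lt hc1)
      linarith
    have hmax : ∀ ε, m < ε → ¬ ∀ᵐ p ∂L, (ε : EReal) ≤ ovV 0 p := by
      intro ε hε hc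
      exact absurd (le_csSup hSb hc) (not_le.2 hε)
    have hdesc : ∀ n : ℕ, ∀ x r, 0 < x → x ≤ m * (n + 1) → TrL L x r →
        ∃ x' r', 0 < x' ∧ x' ≤ m ∧ TrL L x' r' := by
      intro n
      induction n with
      | zero => intro x r h1 h2 h3; exact ⟨x, r, h1, by simpa using h2, h3⟩
      | succ n ih =>
        intro x r h1 h2 h3
        by_cases h4 : x ≤ m
        · exact ⟨x, r, h1, h4, h3⟩
        · push Not at h4
          obtain ⟨z, -, hz1, hz2, hz3⟩ := descent hD le_rfl hmS (hmax x h4) le_rfl h3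
          push_cast at h2
          exact ih _ _ (by linarith) (by linarith) hz3
    obtain ⟨n, hn⟩ := exists_nat_gt (x / m)
    rw [div_lt_iff₀ hm0] at hn
    obtain ⟨x', r', hx'0, hx'm, hT⟩ := hdesc n x r hx (by linarith) h
    have hr : ConstL L 0 r' := by
      filter_upwards [hT.real le_rfl hx'0, hmS] with p h1 h2
      rcases h1 with h1 | h1
      · exact absurd ((EReal.coe_le_coe_iff.2 hx'm).trans h2) (not_le.2 h1)
      · exact h1
    have hrm : r' = m := by
      by_contra hne
      rcases lt_or_gt_of_ne hne with hlt | hlt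
      · apply h0
        filter_upwards [hr, hmS] with p h1 h2
        rcases h1 with h1 | h1
        · rw [h1, EReal.coe_le_coe_iff] at h2; linarith
        · exact h1
      · apply hmax r' hlt
        filter_upwards [hr] with p h1
        rcases h1 with h1 | h1
        · rw [h1]
        · rw [h1]; exact le_top
    rw [hrm] at hr
    refine ⟨m, hm0, ?_⟩
    have hfin : ∀ n : ℕ, ∀ a, 0 ≤ a → a < m * (n + 1) → ConstL L a (m * (⌊a / m⌋ + 1)) := by
      have base : ∀ a, 0 ≤ a → a < m → ConstL L a (m * (⌊a / m⌋ + 1)) := by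
        intro a ha ham
        have hfl : ⌊a / m⌋ = 0 := by
          rw [Int.floor_eq_zero_iff]
          exact ⟨by positivity, (div_lt_one hm0).2 ham⟩
        rw [hfl]
        filter_upwards [hr] with p hp
        rcases hp with hp | hp
        · left
          rw [ovV_gap ha (by rw [hp]; exact EReal.coe_lt_coe_iff.2 ham), hp]
          simp
        · right
          exact top_le_iff.1 (hp ▸ ovV_mono ha p)
      intro n
      induction n with
      | zero => intro a ha hlt; exact base a ha (by simpa using hlt)
      | succ n ih =>
        intro a ha hlt
        push_cast at hlt
        by_cases ham : a < m
        · exact base a ha ham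
        · have := hU 0 m (a - m) _ le_rfl hm0.le (by linarith) hr (ih (a - m) (by linarith) (by linarith))
          have e1 : m + (a - m) = a := by ring
          have e2 : m + m * ((⌊(a - m) / m⌋ : ℝ) + 1) = m * (⌊a / m⌋ + 1) := by
            have : (a - m) / m = a / m - 1 := by field_simp
            rw [this, Int.floor_sub_one]; push_cast; ring
          rwa [e1, e2] at this
    intro a ha
    obtain ⟨n, hn⟩ := exists_nat_gt (a / m)
    rw [div_lt_iff₀ hm0] at hn
    exact hfin n a ha (by linarith)

lemma sInf_ofReal_image {S : Set ℝ} (hS : ∀ t ∈ S, 0 ≤ t)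
    (h : sInf ((fun t : ℝ => ENNReal.ofReal t) '' S) < ⊤) :
    S.Nonempty ∧ (sInf ((fun t : ℝ => ENNReal.ofReal t) '' S)).toReal = sInf S := by
  have hne : S.Nonempty := by
    by_contra hc
    rw [not_nonempty_iff_eq_empty] at hc
    simp [hc] at h
  refine ⟨hne, ?_⟩
  have hb : BddBelow S := ⟨0, hS⟩
  have := Monotone.map_csInf_of_continuousAt (f := fun t : ℝ => ENNReal.ofReal t)
    (ENNReal.continuous_ofReal.continuousAt (x := sInf S))
    (fun a b hab => ENNReal.ofReal_le_ofReal hab) hne hb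
  rw [← this]
  exact ENNReal.toReal_ofReal (Real.sInf_nonneg hS)

lemma hat_spec {Ω : Type*} {X : ℝ → Ω → ℝ} {x : ℝ} {ω : Ω} (h : hitThat X x ω < ⊤) :
    ∃ τ, IsHit (fun t => X t ω) x τ ∧ stopValHat X x ω = X τ ω := by
  obtain ⟨h1, h2⟩ := sInf_ofReal_image (fun t ht => ht.1) h
  refine ⟨_, isHit_sInf (f := fun t => X t ω) h1, ?_⟩
  unfold stopValHat hitThat
  rw [h2]

lemma T_spec {Ω : Type*} {X : ℝ → Ω → ℝ} {x : ℝ} {ω : Ω} (hc : IsCadlag fun t => X t ω)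
    (h : hitT X x ω < ⊤) :
    ∃ τ, 0 ≤ τ ∧ x ≤ X τ ω ∧ (∀ s, 0 ≤ s → s < τ → X s ω < x) ∧ stopVal X x ω = X τ ω := by
  obtain ⟨h1, h2⟩ := sInf_ofReal_image (fun t ht => ht.1) h
  have hb : BddBelow {t : ℝ | 0 ≤ t ∧ x ≤ X t ω} := ⟨0, fun t ht => ht.1⟩
  have h0 : 0 ≤ sInf {t : ℝ | 0 ≤ t ∧ x ≤ X t ω} := Real.sInf_nonneg fun t ht => ht.1
  refine ⟨sInf {t : ℝ | 0 ≤ t ∧ x ≤ X t ω}, h0, ?_, ?_, ?_⟩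
  · by_contra hcon
    obtain ⟨δ, hδ, H⟩ := rc_ev hc h0 isOpen_Iio
      (show (fun t => X t ω) (sInf {t : ℝ | 0 ≤ t ∧ x ≤ X t ω}) ∈ Iio x from not_le.1 hcon)
    obtain ⟨t, ht, hlt⟩ := exists_lt_of_csInf_lt h1 (lt_add_of_pos_right _ hδ)
    exact absurd (H t (csInf_le hb ht) hlt) (not_lt.2 ht.2)
  · intro s hs hlt
    by_contra hcon
    exact absurd (csInf_le hb (show s ∈ {t : ℝ | 0 ≤ t ∧ x ≤ X t ω} from ⟨hs, not_lt.1 hcon⟩))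
      (not_le.2 hlt)
  · unfold stopVal hitT
    rw [h2]

lemma T_fin {Ω : Type*} {X : ℝ → Ω → ℝ} {x t : ℝ} {ω : Ω} (ht : 0 ≤ t) (h : x ≤ X t ω) :
    hitT X x ω < ⊤ :=
  lt_of_le_of_lt (sInf_le ⟨t, ⟨ht, h⟩, rfl⟩) ENNReal.ofReal_lt_top

/-- if `V_w ≥ x` for some `w < x`, then `X(T_x) = V_w`. -/
lemma T_eq_of_ge {Ω : Type*} {X : ℝ → Ω → ℝ} {x w : ℝ} {ω : Ω} (hc : IsCadlag fun t => X t ω)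
    (hwx : w < x) (hge : (x : EReal) ≤ ovV w (rp fun t => X t ω))
    (hne : ovV w (rp fun t => X t ω) ≠ ⊤) :
    hitT X x ω < ⊤ ∧ (stopVal X x ω : EReal) = ovV w (rp fun t => X t ω) := by
  have hH := isHit_of_ne_top hne
  rw [hH.ovV_eq hc] at hge ⊢
  have hge := EReal.coe_le_coe_iff.1 hge
  set σ := sInf {t : ℝ | 0 ≤ t ∧ w < X t ω}
  have hfin : hitT X x ω < ⊤ := T_fin hH.nonneg hge
  refine ⟨hfin, ?_⟩
  obtain ⟨τ, h0, h1, h2, h3⟩ := T_spec hc hfin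
  have : τ = σ := by
    apply le_antisymm
    · by_contra hcon
      exact absurd (h2 σ hH.nonneg (not_le.1 hcon)) (not_lt.2 hge)
    · by_contra hcon
      have := hH.before τ h0 (not_le.1 hcon)
      linarith
  rw [h3, this]

lemma neg_levels {Ω : Type*} {X : ℝ → Ω → ℝ} {ω : Ω} (h0 : X 0 ω = 0) {x : ℝ} :
    (x ≤ 0 → stopVal X x ω = 0) ∧ (x < 0 → stopValHat X x ω = 0) := by
  constructor
  · intro hx
    have : hitT X x ω = 0 := by
      refine le_antisymm (sInf_le ⟨0, ⟨le_rfl, by rw [h0]; exact hx⟩, by simp⟩) bot_le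
    simp [stopVal, this, h0]
  · intro hx
    have : hitThat X x ω = 0 := by
      refine le_antisymm (sInf_le ⟨0, ⟨le_rfl, by rw [h0]; exact hx⟩, by simp⟩) bot_le
    simp [stopValHat, this, h0]

lemma final_creep {Ω : Type*} {X : ℝ → Ω → ℝ} {ω : Ω} (hc : IsCadlag fun t => X t ω)
    (h0 : X 0 ω = 0)
    (hq : ∀ q : ℚ≥0, ovV q (rp fun t => X t ω) = ((q : ℝ) : EReal) ∨
      ovV q (rp fun t => X t ω) = ⊤) (x : ℝ) :
    (hitT X x ω < ⊤ → stopVal X x ω = max x 0) ∧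
    (hitThat X x ω < ⊤ → stopValHat X x ω = max x 0) := by
  constructor
  · intro h
    rcases le_or_gt x 0 with hx | hx
    · rw [(neg_levels h0).1 hx, max_eq_right hx]
    rw [max_eq_left hx.le]
    obtain ⟨τ, h0, h1, h2, h3⟩ := T_spec hc h
    rw [h3]
    by_contra hne
    obtain ⟨q, hq1, hq2⟩ := exists_nnrat hx.le (lt_of_le_of_ne h1 (Ne.symm hne))
    have hH : IsHit (fun t => X t ω) q τ := by
      refine ⟨h0, fun s hs hlt => ((h2 s hs hlt).trans hq1).le, fun ε hε => ?_⟩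
      exact ⟨τ, le_rfl, by linarith, hq2⟩
    have := hq q
    rw [hH.ovV_eq hc] at this
    rcases this with h4 | h4
    · rw [EReal.coe_eq_coe_iff] at h4; linarith
    · exact EReal.coe_ne_top _ h4
  · intro h
    rcases lt_or_ge x 0 with hx | hx
    · rw [(neg_levels h0).2 hx, max_eq_right hx.le]
    rw [max_eq_left hx]
    obtain ⟨τ, hH, h3⟩ := hat_spec h
    rw [h3]
    by_contra hne
    have hge := hH.ge hc
    obtain ⟨q, hq1, hq2⟩ := exists_nnrat hx (lt_of_le_of_ne hge (Ne.symm hne))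
    have hV := hH.ovV_eq hc
    have h4 := hq q
    rw [ovV_gap hq1.le (by rw [hV]; exact EReal.coe_lt_coe_iff.2 hq2), hV] at h4
    rcases h4 with h4 | h4
    · rw [EReal.coe_eq_coe_iff] at h4; linarith
    · exact EReal.coe_ne_top _ h4

lemma final_lattice {Ω : Type*} {X : ℝ → Ω → ℝ} {ω : Ω} (hc : IsCadlag fun t => X t ω)
    (h0 : X 0 ω = 0) {m : ℝ} (hm : 0 < m)
    (hq : ∀ q : ℚ≥0, ovV q (rp fun t => X t ω) = ((m * (⌊(q : ℝ) / m⌋ + 1) : ℝ) : EReal) ∨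
      ovV q (rp fun t => X t ω) = ⊤) (x : ℝ) :
    (hitT X x ω < ⊤ → stopVal X x ω = if x ≤ 0 then 0 else m * ⌈x / m⌉) ∧
    (hitThat X x ω < ⊤ → stopValHat X x ω = if x < 0 then 0 else m * (⌊x / m⌋ + 1)) := by
  constructor
  · intro h
    rcases le_or_gt x 0 with hx | hx
    · rw [(neg_levels h0).1 hx, if_pos hx]
    rw [if_neg (not_le.2 hx)]
    obtain ⟨τ, h0, h1, h2, h3⟩ := T_spec hc h
    have hceil1 := Int.ceil_lt_add_one (x / m)
    have hceil2 := Int.le_ceil (x / m)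
    have hcpos : 0 < ⌈x / m⌉ := Int.ceil_pos.2 (by positivity)
    have hcp : (1 : ℝ) ≤ ⌈x / m⌉ := by exact_mod_cast hcpos
    have hlow : m * ((⌈x / m⌉ : ℝ) - 1) < x := by
      have : (⌈x / m⌉ : ℝ) - 1 < x / m := by linarith
      rw [lt_div_iff₀ hm] at this; linarith
    obtain ⟨q, hq1, hq2⟩ := exists_nnrat (mul_nonneg hm.le (by linarith)) hlow
    have hfl : ⌊(q : ℝ) / m⌋ = ⌈x / m⌉ - 1 := by
      rw [Int.floor_eq_iff]
      push_cast
      constructor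
      · rw [le_div_iff₀ hm]; linarith
      · have : (q : ℝ) / m < x / m := by gcongr
        linarith
    have hne : ovV q (rp fun t => X t ω) ≠ ⊤ :=
      ovV_ne_top_of hc h0 (show (q : ℝ) < X τ ω by linarith)
    have hv := (hq q).resolve_right hne
    have hv2 : m * ((⌊(q : ℝ) / m⌋ : ℝ) + 1) = m * ⌈x / m⌉ := by rw [hfl]; push_cast; ring
    rw [hv2] at hv
    have := (T_eq_of_ge hc hq2 (by
      rw [hv, EReal.coe_le_coe_iff]; rw [div_le_iff₀ hm] at hceil2; linarith) hne).2
    rw [hv, EReal.coe_eq_coe_iff] at this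
    exact this
  · intro h
    rcases lt_or_ge x 0 with hx | hx
    · rw [(neg_levels h0).2 hx, if_pos hx]
    rw [if_neg (not_lt.2 hx)]
    obtain ⟨τ, hH, h3⟩ := hat_spec h
    rw [h3]
    have hV := hH.ovV_eq hc
    set M := m * ((⌊x / m⌋ : ℝ) + 1) with hM
    have hxM : x < M := by
      have := Int.lt_floor_add_one (x / m)
      rw [div_lt_iff₀ hm] at this; linarith
    have key : ∀ q : ℚ≥0, x < q → (q : ℝ) < M → ovV q (rp fun t => X t ω) ≠ ⊤ →
        ovV q (rp fun t => X t ω) = (M : EReal) := by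
      intro q h1 h2 h3
      rw [(hq q).resolve_right h3]
      have : ⌊(q : ℝ) / m⌋ = ⌊x / m⌋ := by
        rw [Int.floor_eq_iff]
        constructor
        · exact (Int.floor_le _).trans (by gcongr)
        · rw [div_lt_iff₀ hm]; linarith
      rw [this]
    have hlt : ovV x (rp fun t => X t ω) < ⊤ := by rw [hV]; exact EReal.coe_lt_top _
    rw [← EReal.coe_eq_coe_iff, ← hV]
    apply le_antisymm
    · obtain ⟨c, hc1, hc2⟩ := ovV_right hlt
      obtain ⟨q, hq1, hq2⟩ := exists_nnrat hx (lt_min hc1 hxM)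
      rw [← key q hq1 (hq2.trans_le (min_le_right _ _))
        (hc2 q (hq2.trans_le (min_le_left _ _))).ne]
      exact ovV_mono hq1.le _
    · by_contra hcon
      obtain ⟨c, hc1, hc2⟩ := ovV_right (not_le.1 hcon)
      obtain ⟨q, hq1, hq2⟩ := exists_nnrat hx (lt_min hc1 hxM)
      have h5 := hc2 q (hq2.trans_le (min_le_left _ _))
      have := key q hq1 (hq2.trans_le (min_le_right _ _)) (ne_top_of_lt h5)
      rw [this] at h5
      exact lt_irrefl _ h5

structure NiceL {Ω : Type*} {m0 : MeasurableSpace Ω} (P : Measure Ω)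
    (F : MeasureTheory.Filtration ℝ m0) (Z : ℝ → Ω → ℝ) : Prop where
  isProb : IsProbabilityMeasure P
  cadlag : ∀ ω, IsCadlag fun t => Z t ω
  zero : ∀ ω, Z 0 ω = 0
  adapted : ∀ t, 0 ≤ t → Measurable[F t] (Z t)
  indinc : ∀ s t, 0 ≤ s → s ≤ t → ∀ A, MeasurableSet[F s] A → ∀ B, MeasurableSet B →
    P (A ∩ {ω | Z t ω - Z s ω ∈ B}) = P A * P {ω | Z (t - s) ω ∈ B}

section Nice
variable {Ω : Type*} {m0 : MeasurableSpace Ω} {P : Measure Ω}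
    {F : MeasureTheory.Filtration ℝ m0} {Z : ℝ → Ω → ℝ}

lemma NiceL.meas (h : NiceL P F Z) {t : ℝ} (ht : 0 ≤ t) : Measurable (Z t) :=
  (h.adapted t ht).mono (F.le t) le_rfl

lemma NiceL.adapted' (h : NiceL P F Z) {s t : ℝ} (hs : 0 ≤ s) (hst : s ≤ t) :
    Measurable[F t] (Z s) :=
  (h.adapted s hs).mono (F.mono hst) le_rfl

lemma NiceL.markov_prod (h : NiceL P F Z) {S : Type*} [MeasurableSpace S] {u v : ℝ} (hu : 0 ≤ u)
    (huv : u ≤ v) {W : Ω → S} (hW : Measurable[F u] W) :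
    Measure.map (fun ω => (W ω, Z v ω - Z u ω)) P =
      (Measure.map W P).prod (Measure.map (Z (v - u)) P) := by
  have := h.isProb
  have hW' : Measurable W := hW.mono (F.le u) le_rfl
  have hd : Measurable fun ω => Z v ω - Z u ω := (h.meas (hu.trans huv)).sub (h.meas hu)
  have hz := h.meas (sub_nonneg.2 huv)
  have := Measure.isProbabilityMeasure_map (μ := P) hz.aemeasurable
  have := Measure.isProbabilityMeasure_map (μ := P) hW'.aemeasurable
  symm
  apply Measure.prod_eq
  intro s t hs ht
  rw [Measure.map_apply (hW'.prodMk hd) (hs.prod ht), Measure.map_apply hW' hs,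
    Measure.map_apply hz ht]
  exact h.indinc u v hu huv (W ⁻¹' s) (hW hs) t ht

lemma NiceL.markov_lint (h : NiceL P F Z) {S : Type*} [MeasurableSpace S] {u v : ℝ} (hu : 0 ≤ u)
    (huv : u ≤ v) {W : Ω → S} (hW : Measurable[F u] W) {Φ : S × ℝ → ℝ≥0∞} (hΦ : Measurable Φ) :
    ∫⁻ ω, Φ (W ω, Z v ω - Z u ω) ∂P =
      ∫⁻ ω, ∫⁻ y, Φ (W ω, y) ∂(Measure.map (Z (v - u)) P) ∂P := by
  have := h.isProb
  have hW' : Measurable W := hW.mono (F.le u) le_rfl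
  have hd : Measurable fun ω => Z v ω - Z u ω := (h.meas (hu.trans huv)).sub (h.meas hu)
  have hz := h.meas (sub_nonneg.2 huv)
  have := Measure.isProbabilityMeasure_map (μ := P) hz.aemeasurable
  rw [← lintegral_map hΦ (hW'.prodMk hd), h.markov_prod hu huv hW,
    lintegral_prod _ hΦ.aemeasurable, lintegral_map hΦ.lintegral_prod_right' hW']

noncomputable def fidiJ (P : Measure Ω) (Z : ℝ → Ω → ℝ) (s : ℝ) (A : Set Ω) (I : Finset ℚ≥0)
    (f : ℚ≥0 → ℝ → ℝ≥0∞) : ℝ≥0∞ :=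
  ∫⁻ ω, A.indicator (fun _ => (1 : ℝ≥0∞)) ω * ∏ i ∈ I, f i (Z (s + i) ω - Z s ω) ∂P

lemma NiceL.fidi_empty (h : NiceL P F Z) {s : ℝ} (hs : 0 ≤ s) {A : Set Ω}
    (hA : MeasurableSet[F s] A) (q : ℚ≥0) {f : ℚ≥0 → ℝ → ℝ≥0∞} (hf : ∀ i, Measurable (f i)) :
    fidiJ P Z s A {q} f = P A * ∫⁻ y, f q y ∂(Measure.map (Z q) P) := by
  unfold fidiJ
  simp only [Finset.prod_singleton]
  have hq : (0 : ℝ) ≤ q := by positivity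
  have := h.markov_lint hs (show s ≤ s + q by linarith)
    (W := A.indicator (fun _ => (1 : ℝ≥0∞))) (measurable_const.indicator hA)
    (Φ := fun x => x.1 * f q x.2) (measurable_fst.mul ((hf q).comp measurable_snd))
  simp only at this
  rw [this]
  simp only [add_sub_cancel_left]
  simp_rw [lintegral_const_mul _ (hf q)]
  rw [lintegral_mul_const _ (measurable_const.indicator (F.le s A hA)),
    lintegral_indicator (F.le s A hA)]
  simp

noncomputable def fidiUp (P : Measure Ω) (Z : ℝ → Ω → ℝ) (f : ℚ≥0 → ℝ → ℝ≥0∞) (t q : ℚ≥0) :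
    ℚ≥0 → ℝ → ℝ≥0∞ :=
  Function.update f t fun y => f t y *
    ∫⁻ d, f q (y + d) ∂(Measure.map (Z ((q : ℝ) - t)) P)

lemma NiceL.fidi_step (h : NiceL P F Z) {s : ℝ} (hs : 0 ≤ s) {A : Set Ω}
    (hA : MeasurableSet[F s] A) {t q : ℚ≥0} {I : Finset ℚ≥0} (htI : t ∈ I)
    (hmax : ∀ i ∈ I, i ≤ t) (htq : t < q) {f : ℚ≥0 → ℝ → ℝ≥0∞} (hf : ∀ i, Measurable (f i)) :
    fidiJ P Z s A (insert q I) f = fidiJ P Z s A I (fidiUp P Z f t q) := by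
  have := h.isProb
  unfold fidiJ
  have hqI : q ∉ I := fun hc => absurd (hmax q hc) (not_le.2 htq)
  have ht0 : (0 : ℝ) ≤ t := by positivity
  have htq' : (t : ℝ) < q := by exact_mod_cast htq
  have hG : Measurable[F (s + t)] fun ω => A.indicator (fun _ => (1 : ℝ≥0∞)) ω *
      ∏ i ∈ I, f i (Z (s + i) ω - Z s ω) := by
    refine Measurable.mul (measurable_const.indicator (F.mono (by linarith) A hA)) ?_
    refine Finset.measurable_prod _ fun i hi => (hf i).comp ?_
    have hi0 : (0 : ℝ) ≤ i := by positivity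
    have hit : (i : ℝ) ≤ t := by exact_mod_cast hmax i hi
    exact (h.adapted' (by linarith) (by linarith)).sub (h.adapted' hs (by linarith))
  have hY : Measurable[F (s + t)] fun ω => Z (s + t) ω - Z s ω :=
    (h.adapted' (by linarith) le_rfl).sub (h.adapted' hs (by linarith))
  have key := h.markov_lint (u := s + t) (v := s + q) (by linarith) (by linarith)
    (W := fun ω => (A.indicator (fun _ => (1 : ℝ≥0∞)) ω *
      ∏ i ∈ I, f i (Z (s + i) ω - Z s ω), Z (s + t) ω - Z s ω)) (hG.prodMk hY)
    (Φ := fun x : (ℝ≥0∞ × ℝ) × ℝ => x.1.1 * f q (x.1.2 + x.2))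
    (Measurable.mul (by fun_prop) ((hf q).comp (by fun_prop)))
  simp only at key
  calc _ = ∫⁻ ω, A.indicator (fun _ => (1 : ℝ≥0∞)) ω *
      (∏ i ∈ I, f i (Z (s + i) ω - Z s ω)) *
        f q (Z (s + t) ω - Z s ω + (Z (s + q) ω - Z (s + t) ω)) ∂P := by
        refine lintegral_congr fun ω => ?_
        rw [Finset.prod_insert hqI, mul_comm (f q _), ← mul_assoc]
        congr 2
        ring
    _ = _ := by
        rw [key]
        refine lintegral_congr fun ω => ?_
        have hmm : Measurable fun y => f q (Z (s + t) ω - Z s ω + y) :=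
          (hf q).comp (measurable_const_add (Z (s + t) ω - Z s ω))
        rw [lintegral_const_mul _ hmm, mul_assoc]
        congr 1
        rw [← Finset.mul_prod_erase _ _ htI, ← Finset.mul_prod_erase _ _ htI]
        have e : ∏ x ∈ I.erase t, fidiUp P Z f t q x (Z (s + x) ω - Z s ω) =
            ∏ x ∈ I.erase t, f x (Z (s + x) ω - Z s ω) := by
          refine Finset.prod_congr rfl fun i hi => ?_
          simp [fidiUp, Finset.ne_of_mem_erase hi]
        rw [e]
        simp only [fidiUp, Function.update_self]
        rw [show s + (q : ℝ) - (s + t) = q - t by ring]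
        ring

lemma fidiUp_meas [SFinite P] {f : ℚ≥0 → ℝ → ℝ≥0∞} (hf : ∀ i, Measurable (f i)) (t q : ℚ≥0) (i : ℚ≥0) :
    Measurable (fidiUp P Z f t q i) := by
  unfold fidiUp
  by_cases hi : i = t
  · subst hi
    simp only [Function.update_self]
    refine (hf i).mul ?_
    exact Measurable.lintegral_prod_right' (f := fun x : ℝ × ℝ => f q (x.1 + x.2))
      ((hf q).comp (by fun_prop))
  · simp only [Function.update_of_ne hi]
    exact hf i

lemma NiceL.fidi (h : NiceL P F Z) {s : ℝ} (hs : 0 ≤ s) {A : Set Ω}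
    (hA : MeasurableSet[F s] A) (I : Finset ℚ≥0) :
    ∀ f : ℚ≥0 → ℝ → ℝ≥0∞, (∀ i, Measurable (f i)) →
    fidiJ P Z s A I f = P A * fidiJ P Z 0 univ I f := by
  have := h.isProb
  induction I using Finset.induction_on_max with
  | empty =>
    intro f hf
    simp [fidiJ, lintegral_indicator (F.le s A hA)]
  | insert q I hq ih =>
    intro f hf
    rcases I.eq_empty_or_nonempty with rfl | hne
    · simp only [insert_empty_eq]
      rw [h.fidi_empty hs hA q hf, h.fidi_empty le_rfl MeasurableSet.univ q hf]
      simp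
    · rw [h.fidi_step hs hA (I.max'_mem hne) (fun i hi => I.le_max' i hi) (hq _ (I.max'_mem hne)) hf,
        h.fidi_step le_rfl MeasurableSet.univ (I.max'_mem hne) (fun i hi => I.le_max' i hi)
          (hq _ (I.max'_mem hne)) hf]
      exact ih _ (fidiUp_meas hf _ _)

noncomputable def pathLaw (P : Measure Ω) (Z : ℝ → Ω → ℝ) : Measure (ℚ≥0 → ℝ) :=
  Measure.map (fun ω => rp fun t => Z t ω) P

lemma NiceL.path_meas (h : NiceL P F Z) : Measurable (fun ω => rp fun t => Z t ω) :=
  measurable_pi_iff.2 fun q => h.meas (by positivity)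

lemma NiceL.law_prob (h : NiceL P F Z) : IsProbabilityMeasure (pathLaw P Z) := by
  have := h.isProb
  exact Measure.isProbabilityMeasure_map h.path_meas.aemeasurable

lemma fidiJ_ind (A : Set Ω) (s : ℝ) (I : Finset ℚ≥0) (B : ℚ≥0 → Set ℝ)
    (hms : MeasurableSet (A ∩ {ω | ∀ i ∈ I, Z (s + i) ω - Z s ω ∈ B i})) :
    fidiJ P Z s A I (fun i => (B i).indicator fun _ => 1) =
      P (A ∩ {ω | ∀ i ∈ I, Z (s + i) ω - Z s ω ∈ B i}) := by
  unfold fidiJ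
  rw [← lintegral_indicator_one hms]
  refine lintegral_congr fun ω => ?_
  classical
  by_cases h1 : ω ∈ A
  · by_cases h2 : ∀ i ∈ I, Z (s + i) ω - Z s ω ∈ B i
    · rw [indicator_of_mem h1, indicator_of_mem (show ω ∈ A ∩ {ω | ∀ i ∈ I, Z (s + i) ω - Z s ω ∈ B i} from ⟨h1, h2⟩),
        Finset.prod_eq_one fun i hi => indicator_of_mem (h2 i hi) _]
      simp
    · rw [indicator_of_notMem (show ω ∉ A ∩ {ω | ∀ i ∈ I, Z (s + i) ω - Z s ω ∈ B i} from fun hc => h2 hc.2)]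
      push Not at h2
      obtain ⟨i, hi, hn⟩ := h2
      rw [Finset.prod_eq_zero hi (indicator_of_notMem hn _), mul_zero]
  · rw [indicator_of_notMem h1, indicator_of_notMem (show ω ∉ A ∩ {ω | ∀ i ∈ I, Z (s + i) ω - Z s ω ∈ B i} from fun hc => h1 hc.1),
      zero_mul]

lemma NiceL.shift_meas (h : NiceL P F Z) {s : ℝ} (hs : 0 ≤ s) :
    Measurable (fun ω => rp (shiftPath (fun t => Z t ω) s)) :=
  measurable_pi_iff.2 fun q => (h.meas (by positivity)).sub (h.meas hs)

lemma NiceL.law_shift (h : NiceL P F Z) {s : ℝ} (hs : 0 ≤ s) {A : Set Ω}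
    (hA : MeasurableSet[F s] A) :
    Measure.map (fun ω => rp (shiftPath (fun t => Z t ω) s)) (P.restrict A) =
      P A • pathLaw P Z := by
  have := h.isProb
  have := h.law_prob
  have hA' := F.le s A hA
  have : IsFiniteMeasure (Measure.map (fun ω => rp (shiftPath (fun t => Z t ω) s)) (P.restrict A)) :=
    Measure.isFiniteMeasure_map _ _
  have hsm := h.shift_meas hs
  refine ext_of_generate_finite _ generateFrom_squareCylinders.symm
    (isPiSystem_squareCylinders (fun _ => MeasurableSpace.isPiSystem_measurableSet) (by simp)) ?_ ?_
  · rintro _ ⟨I, B, hB, rfl⟩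
    have hB' : ∀ i, MeasurableSet (B i) := fun i => by simpa using hB i (mem_univ i)
    have hms : MeasurableSet ((I : Set ℚ≥0).pi B) := MeasurableSet.pi I.countable_toSet
      fun i _ => hB' i
    have e1 : (fun ω => rp (shiftPath (fun t => Z t ω) s)) ⁻¹' ((I : Set ℚ≥0).pi B) ∩ A =
        A ∩ {ω | ∀ i ∈ I, Z (s + i) ω - Z s ω ∈ B i} := by
      ext ω; simp [rp, shiftPath, and_comm]
    have e2 : (fun ω => rp fun t => Z t ω) ⁻¹' ((I : Set ℚ≥0).pi B) =
        univ ∩ {ω | ∀ i ∈ I, Z (0 + i) ω - Z 0 ω ∈ B i} := by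
      ext ω; simp [rp, h.zero]
    rw [Measure.map_apply hsm hms, Measure.restrict_apply (hsm hms), Measure.smul_apply, pathLaw,
      Measure.map_apply h.path_meas hms, smul_eq_mul, e1, e2, ← fidiJ_ind, ← fidiJ_ind]
    · exact h.fidi hs hA I _ fun i => measurable_const.indicator (hB' i)
    · rw [← e2]; exact h.path_meas hms
    · rw [← e1]; exact (hsm hms).inter hA'
  · rw [Measure.map_apply hsm .univ]
    simp


/-- strong Markov property, discretised -/
noncomputable def discT (n : ℕ) (k : ℕ) : ℝ := ((k : ℝ) + 1) / ((n : ℝ) + 1)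

lemma discT_nonneg (n k : ℕ) : 0 ≤ discT n k := by unfold discT; positivity

lemma NiceL.disc_meas (h : NiceL P F Z) {τ : Ω → ℝ} (hτ : Measurable τ) (n : ℕ) :
    Measurable (fun ω => rp (shiftPath (fun t => Z t ω) (discT n ⌊((n : ℝ) + 1) * τ ω⌋₊))) := by
  have hK : Measurable fun ω => ⌊((n : ℝ) + 1) * τ ω⌋₊ :=
    Nat.measurable_floor.comp (hτ.const_mul _)
  intro E hE
  have e : (fun ω => rp (shiftPath (fun t => Z t ω) (discT n ⌊((n : ℝ) + 1) * τ ω⌋₊))) ⁻¹' E =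
      ⋃ k : ℕ, ((fun ω => ⌊((n : ℝ) + 1) * τ ω⌋₊) ⁻¹' {k}) ∩
        ((fun ω => rp (shiftPath (fun t => Z t ω) (discT n k))) ⁻¹' E) := by
    ext ω
    simp only [mem_preimage, mem_iUnion, mem_inter_iff, mem_singleton_iff]
    constructor
    · intro hh
      exact ⟨_, rfl, hh⟩
    · rintro ⟨k, h1, h2⟩
      rw [h1]; exact h2
  rw [e]
  exact MeasurableSet.iUnion fun k =>
    (hK (measurableSet_singleton k)).inter (h.shift_meas (discT_nonneg n k) hE)

lemma NiceL.disc_law (h : NiceL P F Z) {τ : Ω → ℝ} (hτ : Measurable τ) (hτ0 : ∀ ω, 0 ≤ τ ω)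
    {A : Set Ω} (hA : ∀ t, 0 ≤ t → MeasurableSet[F t] (A ∩ {ω | τ ω < t})) (hA0 : MeasurableSet A)
    (n : ℕ) :
    Measure.map (fun ω => rp (shiftPath (fun t => Z t ω) (discT n ⌊((n : ℝ) + 1) * τ ω⌋₊)))
      (P.restrict A) = P A • pathLaw P Z := by
  have := h.isProb
  set K : Ω → ℕ := fun ω => ⌊((n : ℝ) + 1) * τ ω⌋₊ with hK
  have hKm : Measurable K := Nat.measurable_floor.comp (hτ.const_mul _)
  have hn : (0 : ℝ) < (n : ℝ) + 1 := by positivity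
  have hKlt : ∀ k : ℕ, {ω | K ω < k} = {ω | τ ω < k / ((n : ℝ) + 1)} := by
    intro k
    ext ω
    simp only [mem_ofPred_eq, hK]
    rw [Nat.floor_lt (mul_nonneg hn.le (hτ0 ω)), lt_div_iff₀ hn, mul_comm]
  have hAk : ∀ k : ℕ, MeasurableSet[F (discT n k)] (A ∩ K ⁻¹' {k}) := by
    intro k
    have e : A ∩ K ⁻¹' {k} = (A ∩ {ω | K ω < (k + 1 : ℕ)}) \ (A ∩ {ω | K ω < k}) := by
      ext ω; simp only [mem_inter_iff, mem_preimage, mem_singleton_iff, Set.mem_sdiff, mem_ofPred_eq]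
      constructor
      · rintro ⟨h1, h2⟩; exact ⟨⟨h1, by omega⟩, fun h3 => by omega⟩
      · rintro ⟨⟨h1, h2⟩, h3⟩; exact ⟨h1, by
          have : ¬ K ω < k := fun h4 => h3 ⟨h1, h4⟩
          omega⟩
    rw [e, hKlt, hKlt]
    refine MeasurableSet.diff ?_ ?_
    · have := hA (discT n k) (discT_nonneg n k)
      simpa [discT] using this
    · refine F.mono ?_ _ (hA (k / ((n : ℝ) + 1)) (by positivity))
      unfold discT; gcongr; linarith
  have hdm := h.disc_meas hτ n
  ext E hE
  rw [Measure.map_apply hdm hE, Measure.restrict_apply (hdm hE), Measure.smul_apply, smul_eq_mul]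
  have e1 : ∀ B : Set Ω, MeasurableSet B → P (B ∩ A) = ∑' k, P (B ∩ (A ∩ K ⁻¹' {k})) := by
    intro B hB
    rw [← measure_iUnion]
    · congr 1; ext ω; simp
    · intro i j hij
      refine Set.disjoint_left.2 ?_
      rintro ω ⟨-, -, h1⟩ ⟨-, -, h2⟩
      exact hij (h1.symm.trans h2)
    · intro k
      exact hB.inter (hA0.inter (hKm (measurableSet_singleton k)))
  rw [e1 _ (hdm hE)]
  have e2 := e1 univ .univ
  simp only [univ_inter] at e2
  rw [e2, ← ENNReal.tsum_mul_right]
  refine tsum_congr fun k => ?_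
  have := congrArg (fun μ => μ E) (h.law_shift (discT_nonneg n k) (hAk k))
  rw [Measure.map_apply (h.shift_meas (discT_nonneg n k)) hE,
    Measure.restrict_apply (h.shift_meas (discT_nonneg n k) hE), Measure.smul_apply,
    smul_eq_mul] at this
  rw [← this]
  congr 1
  ext ω
  simp only [mem_inter_iff, mem_preimage, mem_singleton_iff]
  constructor
  · rintro ⟨h1, h2, h3⟩
    refine ⟨?_, h2, h3⟩
    rw [← h3]; exact h1
  · rintro ⟨h1, h2, h3⟩
    refine ⟨?_, h2, h3⟩
    rw [← h3] at h1; exact h1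

lemma disc_tendsto {f : ℝ → ℝ} (hf : IsCadlag f) {τ : ℝ} (hτ : 0 ≤ τ) :
    Tendsto (fun n : ℕ => rp (shiftPath f (discT n ⌊((n : ℝ) + 1) * τ⌋₊))) atTop
      (𝓝 (rp (shiftPath f τ))) := by
  have hge : ∀ n : ℕ, τ ≤ discT n ⌊((n : ℝ) + 1) * τ⌋₊ := by
    intro n
    unfold discT
    rw [le_div_iff₀ (by positivity)]
    have := Nat.lt_floor_add_one (((n : ℝ) + 1) * τ)
    linarith
  have hle : ∀ n : ℕ, discT n ⌊((n : ℝ) + 1) * τ⌋₊ ≤ τ + 1 / ((n : ℝ) + 1) := by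
    intro n
    unfold discT
    have hn : (0 : ℝ) < (n : ℝ) + 1 := by positivity
    rw [add_div]
    gcongr
    rw [div_le_iff₀ hn]
    have := Nat.floor_le (mul_nonneg hn.le hτ)
    linarith
  have hlim : Tendsto (fun n : ℕ => discT n ⌊((n : ℝ) + 1) * τ⌋₊) atTop (𝓝 τ) := by
    refine tendsto_of_tendsto_of_tendsto_of_le_of_le tendsto_const_nhds ?_ hge hle
    simpa using (tendsto_const_nhds (x := τ)).add tendsto_one_div_add_atTop_nhds_zero_nat
  have key : ∀ c : ℝ, 0 ≤ c →
      Tendsto (fun n : ℕ => f (discT n ⌊((n : ℝ) + 1) * τ⌋₊ + c)) atTop (𝓝 (f (τ + c))) := by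
    intro c hc
    have h1 := hf.1 (τ + c) (by linarith)
    refine Tendsto.comp h1 (tendsto_nhdsWithin_of_tendsto_nhds_of_eventually_within _ ?_ ?_)
    · exact hlim.add_const c
    · exact Eventually.of_forall fun n => by simpa using hge n
  rw [tendsto_pi_nhds]
  intro q
  have h2 := key 0 le_rfl
  simp only [add_zero] at h2
  exact (key q (by positivity)).sub h2

lemma NiceL.stop_meas (h : NiceL P F Z) {τ : Ω → ℝ} (hτ : Measurable τ) (hτ0 : ∀ ω, 0 ≤ τ ω) :
    Measurable (fun ω => rp (shiftPath (fun t => Z t ω) (τ ω))) := by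
  refine measurable_pi_iff.2 fun q => ?_
  refine measurable_of_tendsto_metrizable
    (fun n => (measurable_pi_apply q).comp (h.disc_meas hτ n)) ?_
  rw [tendsto_pi_nhds]
  intro ω
  exact (tendsto_pi_nhds.1 (disc_tendsto (h.cadlag ω) (hτ0 ω))) q

lemma NiceL.strong_markov (h : NiceL P F Z) {τ : Ω → ℝ} (hτ : Measurable τ) (hτ0 : ∀ ω, 0 ≤ τ ω)
    {A : Set Ω} (hA : ∀ t, 0 ≤ t → MeasurableSet[F t] (A ∩ {ω | τ ω < t})) (hA0 : MeasurableSet A) :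
    Measure.map (fun ω => rp (shiftPath (fun t => Z t ω) (τ ω))) (P.restrict A) =
      P A • pathLaw P Z := by
  have := h.isProb
  have := h.law_prob
  have : IsFiniteMeasure (P A • pathLaw P Z) := Measure.smul_finite _ (measure_ne_top _ _)
  have : IsFiniteMeasure
    (Measure.map (fun ω => rp (shiftPath (fun t => Z t ω) (τ ω))) (P.restrict A)) :=
    Measure.isFiniteMeasure_map _ _
  let _ := TopologicalSpace.metrizableSpaceMetric (ℚ≥0 → ℝ)
  refine ext_of_forall_integral_eq_of_IsFiniteMeasure fun ψ => ?_
  have hψ : ∀ ν : Measure (ℚ≥0 → ℝ), AEStronglyMeasurable ψ ν := fun ν =>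
    ψ.continuous.aestronglyMeasurable
  rw [integral_map (h.stop_meas hτ hτ0).aemeasurable (hψ _)]
  have hlim : Tendsto (fun n : ℕ => ∫ ω, ψ (rp (shiftPath (fun t => Z t ω)
      (discT n ⌊((n : ℝ) + 1) * τ ω⌋₊))) ∂(P.restrict A)) atTop
      (𝓝 (∫ ω, ψ (rp (shiftPath (fun t => Z t ω) (τ ω))) ∂(P.restrict A))) := by
    refine tendsto_integral_of_dominated_convergence (fun _ => ‖ψ‖) ?_ (integrable_const _) ?_ ?_
    · intro n
      exact (ψ.continuous.measurable.comp (h.disc_meas hτ n)).aestronglyMeasurable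
    · intro n
      exact Eventually.of_forall fun ω => ψ.norm_coe_le_norm _
    · exact Eventually.of_forall fun ω =>
        (ψ.continuous.tendsto _).comp (disc_tendsto (h.cadlag ω) (hτ0 ω))
  refine tendsto_nhds_unique hlim ?_
  have : ∀ n : ℕ, ∫ ω, ψ (rp (shiftPath (fun t => Z t ω)
      (discT n ⌊((n : ℝ) + 1) * τ ω⌋₊))) ∂(P.restrict A) = ∫ p, ψ p ∂(P A • pathLaw P Z) := by
    intro n
    rw [← h.disc_law hτ hτ0 hA hA0 n, integral_map (h.disc_meas hτ n).aemeasurable (hψ _)]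
  simp only [this]
  exact tendsto_const_nhds

lemma ovV_kill {a t : ℝ} {p : ℚ≥0 → ℝ} (h : ∃ q : ℚ≥0, (q : ℝ) < t ∧ a < p q) :
    ovV a (fun q => if (q : ℝ) < t then p q else a) = ovV a p := by
  set p' : ℚ≥0 → ℝ := fun q => if (q : ℝ) < t then p q else a with hp'
  have hsup : ∀ q : ℚ≥0, (q : ℝ) < t → (⨆ (s : ℚ≥0) (_ : s ≤ q), (p' s : EReal)) =
      ⨆ (s : ℚ≥0) (_ : s ≤ q), (p s : EReal) := by
    intro q hq
    refine iSup_congr fun s => iSup_congr fun hs => ?_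
    have : (s : ℝ) < t := lt_of_le_of_lt (by exact_mod_cast hs) hq
    simp [hp', this]
  refine le_antisymm (le_of_forall_gt fun c hc => ?_) (le_of_forall_gt fun c hc => ?_)
  · rw [ovV_lt_iff] at hc ⊢
    obtain ⟨q, hq, hlt⟩ := hc
    obtain ⟨q', hq't, hq'⟩ := h
    by_cases hqt : (q : ℝ) < t
    · exact ⟨q, by simpa [hp', hqt] using hq, by rw [hsup q hqt]; exact hlt⟩
    · refine ⟨q', by simpa [hp', hq't] using hq', ?_⟩
      rw [hsup q' hq't]
      refine lt_of_le_of_lt ?_ hlt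
      have hle : q' ≤ q := by
        have : (q' : ℝ) ≤ q := by linarith
        exact_mod_cast this
      exact iSup₂_le fun s' hs' =>
        le_iSup₂ (f := fun (s : ℚ≥0) (_ : s ≤ q) => (p s : EReal)) s' (hs'.trans hle)
  · rw [ovV_lt_iff] at hc ⊢
    obtain ⟨q, hq, hlt⟩ := hc
    have hqt : (q : ℝ) < t := by
      by_contra hcon
      simp [hp', hcon] at hq
    exact ⟨q, by simpa [hp', hqt] using hq, by rw [← hsup q hqt]; exact hlt⟩

noncomputable def tauA (Z : ℝ → Ω → ℝ) (a : ℝ) (ω : Ω) : ℝ :=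
  sInf {t : ℝ | 0 ≤ t ∧ a < Z t ω}

lemma tauA_nonneg (Z : ℝ → Ω → ℝ) (a : ℝ) (ω : Ω) : 0 ≤ tauA Z a ω :=
  Real.sInf_nonneg fun t ht => ht.1

lemma NiceL.tau_lt (h : NiceL P F Z) {a t : ℝ} {ω : Ω} (hV : ovV a (rp fun t => Z t ω) ≠ ⊤) :
    tauA Z a ω < t ↔ ∃ q : ℚ≥0, (q : ℝ) < t ∧ a < Z q ω := by
  have hH := isHit_of_ne_top hV
  constructor
  · intro hlt
    obtain ⟨s, h1, h2, h3⟩ := hH.after (t - tauA Z a ω) (by linarith)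
    have h1' : tauA Z a ω ≤ s := h1
    have h2' : s < t := by
      have : s < tauA Z a ω + (t - tauA Z a ω) := h2
      linarith
    have hs0 : 0 ≤ s := (tauA_nonneg Z a ω).trans h1'
    obtain ⟨δ, hδ, H⟩ := rc_ev (h.cadlag ω) hs0 isOpen_Ioi
      (show (fun t => Z t ω) s ∈ Ioi a from h3)
    obtain ⟨q, hq1, hq2⟩ := exists_nnrat hs0 (show s < min t (s + δ) from
      lt_min h2' (by linarith))
    exact ⟨q, hq2.trans_le (min_le_left _ _), H q hq1.le (hq2.trans_le (min_le_right _ _))⟩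
  · rintro ⟨q, hq, hlt⟩
    refine lt_of_le_of_lt ?_ hq
    exact csInf_le ⟨0, fun t ht => ht.1⟩ ⟨by positivity, hlt⟩

lemma NiceL.V_meas (h : NiceL P F Z) (a : ℝ) : Measurable fun ω => ovV a (rp fun t => Z t ω) :=
  (ovV_measurable a).comp h.path_meas

lemma NiceL.stop_set (h : NiceL P F Z) (a : ℝ) {C : Set EReal} (hC : MeasurableSet C)
    (hCt : ⊤ ∉ C) (t : ℝ) (ht : 0 ≤ t) :
    MeasurableSet[F t]
      ({ω | ovV a (rp fun t => Z t ω) ∈ C} ∩ {ω | tauA Z a ω < t}) := by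
  have e : {ω | ovV a (rp fun t => Z t ω) ∈ C} ∩ {ω | tauA Z a ω < t} =
      {ω | ovV a (fun q : ℚ≥0 => if (q : ℝ) < t then Z q ω else a) ∈ C} ∩
        ⋃ q : ℚ≥0, {ω | (q : ℝ) < t ∧ a < Z q ω} := by
    ext ω
    simp only [mem_inter_iff, mem_ofPred_eq, mem_iUnion]
    constructor
    · rintro ⟨h1, h2⟩
      have h3 := (h.tau_lt (fun hc => hCt (hc ▸ h1))).1 h2
      refine ⟨?_, h3⟩
      have := ovV_kill (p := rp fun t => Z t ω) h3
      simp only [rp] at this h1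
      rw [this]; exact h1
    · rintro ⟨h1, h2⟩
      have := ovV_kill (p := rp fun t => Z t ω) h2
      simp only [rp] at this
      rw [this] at h1
      exact ⟨h1, (h.tau_lt (fun hc => hCt (by rw [← hc]; exact h1))).2 h2⟩
  rw [e]
  refine MeasurableSet.inter ?_ (MeasurableSet.iUnion fun q => ?_)
  · have hm : Measurable[F t] fun ω => (fun q : ℚ≥0 => if (q : ℝ) < t then Z q ω else a) := by
      refine @measurable_pi_lambda _ _ _ (F t) _ _ fun q => ?_
      by_cases hq : (q : ℝ) < t
      · simp only [hq, if_true]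
        exact h.adapted' (by positivity) hq.le
      · simp only [hq, if_false]
        exact measurable_const
    exact ((ovV_measurable a).comp hm) hC
  · by_cases hq : (q : ℝ) < t
    · simp only [hq, true_and]
      exact (h.adapted' (by positivity) hq.le) measurableSet_Ioi
    · simp [hq]


lemma NiceL.tau_meas (h : NiceL P F Z) (a : ℝ) : Measurable (tauA Z a) := by
  refine measurable_of_Iio fun t => ?_
  have e : tauA Z a ⁻¹' Iio t =
      ({ω | ovV a (rp fun t => Z t ω) ≠ ⊤} ∩ ⋃ q : ℚ≥0, {ω | (q : ℝ) < t ∧ a < Z q ω}) ∪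
      ({ω | ovV a (rp fun t => Z t ω) = ⊤} ∩ {_ω | 0 < t}) := by
    ext ω
    simp only [mem_preimage, mem_Iio, mem_union, mem_inter_iff, mem_ofPred_eq, mem_iUnion]
    by_cases hV : ovV a (rp fun t => Z t ω) = ⊤
    · have hz : tauA Z a ω = 0 := by
        have : {t : ℝ | 0 ≤ t ∧ a < Z t ω} = ∅ := by
          refine Set.eq_empty_of_forall_notMem fun s hs => ?_
          exact ovV_ne_top_of (h.cadlag ω) hs.1 hs.2 hV
        unfold tauA
        rw [this, Real.sInf_empty]
      simp [hV, hz]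
    · rw [h.tau_lt hV]
      simp [hV]
  rw [e]
  have hVm := h.V_meas a
  refine ((hVm (measurableSet_singleton ⊤).compl).inter (MeasurableSet.iUnion fun q => ?_)).union
    ((hVm (measurableSet_singleton ⊤)).inter (MeasurableSet.const _))
  exact (MeasurableSet.const _).inter ((h.meas (by positivity)) measurableSet_Ioi)

noncomputable def VR (Z : ℝ → Ω → ℝ) (a : ℝ) (ω : Ω) : ℝ := (ovV a (rp fun t => Z t ω)).toReal

noncomputable def shY (Z : ℝ → Ω → ℝ) (a : ℝ) (ω : Ω) : ℚ≥0 → ℝ :=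
  rp (shiftPath (fun t => Z t ω) (tauA Z a ω))

lemma NiceL.VR_meas (h : NiceL P F Z) (a : ℝ) : Measurable (VR Z a) :=
  measurable_ereal_toReal.comp (h.V_meas a)

lemma NiceL.shY_meas (h : NiceL P F Z) (a : ℝ) : Measurable (shY Z a) :=
  h.stop_meas (h.tau_meas a) (tauA_nonneg Z a)

def finH (Z : ℝ → Ω → ℝ) (a : ℝ) : Set Ω := {ω | ovV a (rp fun t => Z t ω) ≠ ⊤}

lemma NiceL.finH_meas (h : NiceL P F Z) (a : ℝ) : MeasurableSet (finH Z a) :=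
  h.V_meas a (measurableSet_singleton ⊤).compl

lemma NiceL.prod_law (h : NiceL P F Z) (a : ℝ) :
    Measure.map (fun ω => (VR Z a ω, shY Z a ω)) (P.restrict (finH Z a)) =
      (Measure.map (VR Z a) (P.restrict (finH Z a))).prod (pathLaw P Z) := by
  have := h.isProb
  have := h.law_prob
  have : IsFiniteMeasure (Measure.map (VR Z a) (P.restrict (finH Z a))) :=
    Measure.isFiniteMeasure_map _ _
  symm
  apply Measure.prod_eq
  intro s t hs ht
  rw [Measure.map_apply ((h.VR_meas a).prodMk (h.shY_meas a)) (hs.prod ht),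
    Measure.restrict_apply (((h.VR_meas a).prodMk (h.shY_meas a)) (hs.prod ht)),
    Measure.map_apply (h.VR_meas a) hs, Measure.restrict_apply (h.VR_meas a hs)]
  set C : Set EReal := EReal.toReal ⁻¹' s ∩ {⊤}ᶜ with hC
  have hCm : MeasurableSet C := (measurable_ereal_toReal hs).inter (measurableSet_singleton ⊤).compl
  have hAe : VR Z a ⁻¹' s ∩ finH Z a = {ω | ovV a (rp fun t => Z t ω) ∈ C} := rfl
  have hAm : MeasurableSet {ω | ovV a (rp fun t => Z t ω) ∈ C} := h.V_meas a hCm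
  have key := h.strong_markov (h.tau_meas a) (tauA_nonneg Z a)
    (h.stop_set a hCm (by simp [hC])) hAm
  have key2 := congrArg (fun μ => μ t) key
  have key3 : (P.restrict {ω | ovV a (rp fun t => Z t ω) ∈ C}) (shY Z a ⁻¹' t) =
      P {ω | ovV a (rp fun t => Z t ω) ∈ C} * pathLaw P Z t := by
    rw [← Measure.map_apply (h.shY_meas a) ht]
    exact key2
  rw [Measure.restrict_apply (h.shY_meas a ht)] at key3
  rw [hAe, ← key3]
  congr 1
  rw [← hAe]
  ext ω
  simp only [mem_inter_iff, mem_preimage, mem_prod]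
  tauto

lemma NiceL.ae_prod (h : NiceL P F Z) (a : ℝ) {E : Set (ℝ × (ℚ≥0 → ℝ))} (hE : MeasurableSet E) :
    (∀ᵐ ω ∂P, ω ∈ finH Z a → (VR Z a ω, shY Z a ω) ∈ E) ↔
      ∀ᵐ ω ∂P, ω ∈ finH Z a → ∀ᵐ p ∂(pathLaw P Z), (VR Z a ω, p) ∈ E := by
  have := h.isProb
  have := h.law_prob
  rw [← ae_restrict_iff' (h.finH_meas a), ← ae_restrict_iff' (h.finH_meas a)]
  rw [← ae_map_iff (p := fun x => x ∈ E)
    ((h.VR_meas a).prodMk (h.shY_meas a)).aemeasurable hE, h.prod_law a,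
    Measure.ae_prod_iff_ae_ae (p := fun x => x ∈ E) hE]
  rw [ae_map_iff (h.VR_meas a).aemeasurable]
  exact measurable_measure_prodMk_left hE.compl (measurableSet_singleton 0)

lemma NiceL.VR_coe {a : ℝ} {ω : Ω} (hω : ω ∈ finH Z a) :
    ovV a (rp fun t => Z t ω) = (VR Z a ω : EReal) :=
  (EReal.coe_toReal hω (ne_bot_of_le_ne_bot (EReal.coe_ne_bot a) (ovV_ge a _))).symm

lemma NiceL.V_shift (h : NiceL P F Z) {a w : ℝ} (hw : 0 ≤ w) {ω : Ω} (hω : ω ∈ finH Z a) :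
    ovV (VR Z a ω + w) (rp fun t => Z t ω) = (VR Z a ω : EReal) + ovV w (shY Z a ω) := by
  have hh : IsHit (fun t => Z t ω) a (tauA Z a ω) := isHit_of_ne_top hω
  have h1 := hh.ovV_eq (h.cadlag ω)
  have h2 : VR Z a ω = Z (tauA Z a ω) ω := by
    rw [VR_coe hω] at h1
    exact_mod_cast h1
  have h3 := ovV_shift (h.cadlag ω) hh hw
  rw [h2]
  exact h3

lemma TrL_pt {p : ℚ≥0 → ℝ} {x r : ℝ}
    (hp : ∀ w : ℚ≥0, (w : ℝ) < x → ovV w p < x ∨ ovV w p = r ∨ ovV w p = ⊤)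
    {w : ℝ} (hw0 : 0 ≤ w) (hw : w < x) : ovV w p < x ∨ ovV w p = r ∨ ovV w p = ⊤ := by
  by_cases hx : ovV w p < x
  · exact Or.inl hx
  obtain ⟨q, h1, h2⟩ := exists_nnrat hw0 hw
  have := ovV_gap (p := p) h1.le (lt_of_lt_of_le (EReal.coe_lt_coe_iff.2 h2) (not_lt.1 hx))
  rw [← this]
  exact hp q h2

lemma EReal_shift {z c : ℝ} {v : EReal} :
    ((z : EReal) + v < c → v < ((c - z : ℝ) : EReal)) ∧
    ((z : EReal) + v = c → v = ((c - z : ℝ) : EReal)) ∧ ((z : EReal) + v = ⊤ → v = ⊤) := by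
  induction v with
  | bot => exact ⟨fun _ => EReal.bot_lt_coe _, by simp, by simp⟩
  | top => simp
  | coe v =>
    refine ⟨fun hh => ?_, fun hh => ?_, fun hh => ?_⟩
    · have : z + v < c := by exact_mod_cast hh
      exact_mod_cast (by linarith : v < c - z)
    · have : z + v = c := by exact_mod_cast hh
      exact_mod_cast (by linarith : v = c - z)
    · exact absurd hh (EReal.coe_ne_top (z + v))

lemma NiceL.hD (h : NiceL P F Z) (a x r : ℝ) (ha : 0 ≤ a) (hT : TrL (pathLaw P Z) x r) :
    ∀ᵐ p ∂(pathLaw P Z), ∀ z : ℝ, ovV a p = z → z < x → TrL (pathLaw P Z) (x - z) (r - z) := by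
  have := h.isProb
  have := h.law_prob
  set E : Set (ℝ × (ℚ≥0 → ℝ)) := {y | y.1 < x → ∀ w : ℚ≥0, (w : ℝ) < x - y.1 →
    ovV w y.2 < ((x - y.1 : ℝ) : EReal) ∨ ovV w y.2 = ((r - y.1 : ℝ) : EReal) ∨ ovV w y.2 = ⊤}
    with hEdef
  have hE : MeasurableSet E := by
    have hv : ∀ w : ℝ, Measurable fun y : ℝ × (ℚ≥0 → ℝ) => ovV w y.2 := fun w =>
      (ovV_measurable w).comp measurable_snd
    have hc : ∀ c : ℝ, Measurable fun y : ℝ × (ℚ≥0 → ℝ) => ((c - y.1 : ℝ) : EReal) := fun c =>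
      measurable_coe_real_ereal.comp (measurable_const.sub measurable_fst)
    refine measurableSet_setOfPred.2 (Measurable.imp ?_ (Measurable.forall fun w => Measurable.imp ?_
      (Measurable.or ?_ (Measurable.or ?_ ?_))))
    · exact measurableSet_setOfPred.1 (measurableSet_lt measurable_fst measurable_const)
    · exact measurableSet_setOfPred.1 (measurableSet_lt measurable_const
        (measurable_const.sub measurable_fst))
    · exact measurableSet_setOfPred.1 (measurableSet_lt (hv w) (hc x))
    · exact measurableSet_setOfPred.1 (measurableSet_eq_fun (hv w) (hc r))
    · exact measurableSet_setOfPred.1 (measurableSet_eq_fun (hv w) measurable_const)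
  have h1 : ∀ᵐ ω ∂P, ω ∈ finH Z a → (VR Z a ω, shY Z a ω) ∈ E := by
    filter_upwards [ae_of_ae_map h.path_meas.aemeasurable hT] with ω hω hf hz w hw
    simp only at hz hw ⊢
    have hz0 : 0 ≤ VR Z a ω := by
      have := ovV_ge a (rp fun t => Z t ω)
      rw [VR_coe hf] at this
      exact ha.trans (by exact_mod_cast this)
    have hw0 : (0 : ℝ) ≤ w := by positivity
    have h2 := TrL_pt hω (w := VR Z a ω + w) (by linarith) (by linarith)
    rw [h.V_shift hw0 hf] at h2
    rcases h2 with h2 | h2 | h2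
    · exact Or.inl (EReal_shift.1 h2)
    · exact Or.inr (Or.inl (EReal_shift.2.1 h2))
    · exact Or.inr (Or.inr ((EReal_shift (c := 0)).2.2 h2))
  rw [h.ae_prod a hE] at h1
  have h3 : ∀ᵐ p ∂(pathLaw P Z), ovV a p ≠ ⊤ →
      ∀ᵐ p' ∂(pathLaw P Z), ((ovV a p).toReal, p') ∈ E := by
    refine (ae_map_iff h.path_meas.aemeasurable ?_).2 h1
    refine measurableSet_setOfPred.2 (Measurable.imp ?_ ?_)
    · exact measurableSet_setOfPred.1 ((ovV_measurable a) (measurableSet_singleton ⊤).compl)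
    · refine measurableSet_setOfPred.1 ?_
      have hm : Measurable fun p => (ovV a p).toReal :=
        measurable_ereal_toReal.comp (ovV_measurable a)
      exact ((measurable_measure_prodMk_left (ν := pathLaw P Z) hE.compl).comp hm)
        (measurableSet_singleton 0)
  filter_upwards [h3] with p hp z hz hzx
  have h4 := hp (by rw [hz]; exact EReal.coe_ne_top z)
  rw [hz, EReal.toReal_coe] at h4
  filter_upwards [h4] with p' hp' w hw
  exact hp' hzx w hw

lemma NiceL.hU (h : NiceL P F Z) (a v w u : ℝ) (hav : a ≤ v) (hw : 0 ≤ w)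
    (h1 : ConstL (pathLaw P Z) a v) (h2 : ConstL (pathLaw P Z) w u) :
    ConstL (pathLaw P Z) (v + w) (v + u) := by
  have hE0 : ∀ b c : ℝ, MeasurableSet {p : ℚ≥0 → ℝ | ovV b p = c ∨ ovV b p = ⊤} := fun b c =>
    (ovV_measurable b (measurableSet_singleton _)).union
      (ovV_measurable b (measurableSet_singleton _))
  have h3 : ∀ᵐ ω ∂P, ω ∈ finH Z a →
      (VR Z a ω, shY Z a ω) ∈ (Prod.snd ⁻¹' {p : ℚ≥0 → ℝ | ovV w p = u ∨ ovV w p = ⊤} :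
        Set (ℝ × (ℚ≥0 → ℝ))) := by
    rw [h.ae_prod a (measurable_snd (hE0 w u))]
    exact Eventually.of_forall fun ω _ => h2
  refine (ae_map_iff h.path_meas.aemeasurable (hE0 _ _)).2 ?_
  filter_upwards [h3, ae_of_ae_map h.path_meas.aemeasurable h1] with ω h4 h5
  rcases h5 with h5 | h5
  · have hf : ω ∈ finH Z a := by
      show ovV a (rp fun t => Z t ω) ≠ ⊤
      rw [h5]; exact EReal.coe_ne_top v
    have e : VR Z a ω = v := by
      rw [VR_coe hf] at h5
      exact_mod_cast h5
    have h6 := h.V_shift hw hf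
    rw [e] at h6
    rw [h6]
    rcases h4 hf with h7 | h7
    · left
      have h7' : ovV w (shY Z a ω) = u := h7
      rw [h7']; norm_cast
    · right
      have h7' : ovV w (shY Z a ω) = ⊤ := h7
      rw [h7']; exact EReal.coe_add_top v
  · right
    have := ovV_mono (show a ≤ v + w by linarith) (rp fun t => Z t ω)
    rw [h5] at this
    exact top_le_iff.1 this

lemma NiceL.main (h : NiceL P F Z) {x r : ℝ} (hx : 0 < x) (hT : TrL (pathLaw P Z) x r) :
    (∀ᵐ ω ∂P, ∀ q : ℚ≥0, ovV q (rp fun t => Z t ω) = ((q : ℝ) : EReal) ∨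
      ovV q (rp fun t => Z t ω) = ⊤) ∨
    ∃ m : ℝ, 0 < m ∧ ∀ᵐ ω ∂P, ∀ q : ℚ≥0,
      ovV q (rp fun t => Z t ω) = ((m * (⌊(q : ℝ) / m⌋ + 1) : ℝ) : EReal) ∨
      ovV q (rp fun t => Z t ω) = ⊤ := by
  rcases main_abs (pathLaw P Z) h.hD (fun a v w u _ hav hw h1 h2 => h.hU a v w u hav hw h1 h2)
    hx hT with h1 | ⟨m, hm, h1⟩
  · left
    exact ae_all_iff.2 fun q => ae_of_ae_map h.path_meas.aemeasurable (h1 q (by positivity))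
  · right
    exact ⟨m, hm, ae_all_iff.2 fun q =>
      ae_of_ae_map h.path_meas.aemeasurable (h1 q (by positivity))⟩

end Nice

section Final
variable {Ω : Type*} {m0 : MeasurableSpace Ω} {P : Measure Ω}
    {F : MeasureTheory.Filtration ℝ m0} {X : ℝ → Ω → ℝ}

open Classical in
noncomputable def modZ (X : ℝ → Ω → ℝ) (t : ℝ) (ω : Ω) : ℝ :=
  if IsCadlag (fun t => X t ω) ∧ X 0 ω = 0 then X t ω else 0

lemma modZ_good {ω : Ω} (hω : IsCadlag (fun t => X t ω) ∧ X 0 ω = 0) (t : ℝ) :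
    modZ X t ω = X t ω := if_pos hω

lemma modZ_bad {ω : Ω} (hω : ¬ (IsCadlag (fun t => X t ω) ∧ X 0 ω = 0)) (t : ℝ) :
    modZ X t ω = 0 := if_neg hω

lemma IsLevy.good (hX : IsLevy P F X) : ∀ᵐ ω ∂P, IsCadlag (fun t => X t ω) ∧ X 0 ω = 0 := by
  have := hX.isProb
  have hm : Measurable (X 0) := (hX.adapted 0).mono (F.le 0) le_rfl
  have h0 : ∀ᵐ ω ∂P, X 0 ω = 0 :=
    (prob_compl_eq_zero_iff (hm (measurableSet_singleton 0))).2 hX.start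
  exact hX.cadlag.and h0

lemma IsLevy.nice (hX : IsLevy P F X) : NiceL P F (modZ X) := by
  have := hX.isProb
  have hg := hX.good
  have hmX : ∀ t, Measurable (X t) := fun t => (hX.adapted t).mono (F.le t) le_rfl
  refine ⟨hX.isProb, fun ω => ?_, fun ω => ?_, fun t ht => ?_, ?_⟩
  · by_cases hω : IsCadlag (fun t => X t ω) ∧ X 0 ω = 0
    · simp only [modZ_good hω]; exact hω.1
    · simp only [modZ_bad hω]
      exact ⟨fun t _ => continuousWithinAt_const, fun t _ => ⟨0, tendsto_const_nhds⟩⟩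
  · by_cases hω : IsCadlag (fun t => X t ω) ∧ X 0 ω = 0
    · rw [modZ_good hω]; exact hω.2
    · rw [modZ_bad hω]
  · have hN : MeasurableSet[F 0] {ω | ¬ (IsCadlag (fun t => X t ω) ∧ X 0 ω = 0)} :=
      hX.nullF0 _ hg
    have hN' : MeasurableSet[F t] {ω | IsCadlag (fun t => X t ω) ∧ X 0 ω = 0} := by
      have := (F.mono ht _ hN).compl
      have e : {ω | ¬ (IsCadlag (fun t => X t ω) ∧ X 0 ω = 0)}ᶜ =
        {ω | IsCadlag (fun t => X t ω) ∧ X 0 ω = 0} := by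
        ext ω; simp only [mem_compl_iff, mem_ofPred_eq, not_not]
      rwa [e] at this
    unfold modZ
    exact Measurable.ite hN' (hX.adapted t) measurable_const
  · intro s t hs hst A hA B hB
    have e1 : P (A ∩ {ω | modZ X t ω - modZ X s ω ∈ B}) = P (A ∩ {ω | X t ω - X s ω ∈ B}) := by
      refine measure_congr ?_
      filter_upwards [hg] with ω hω
      refine propext ?_
      show (ω ∈ A ∧ modZ X t ω - modZ X s ω ∈ B) ↔ (ω ∈ A ∧ X t ω - X s ω ∈ B)
      rw [modZ_good hω, modZ_good hω]
    have e2 : P {ω | modZ X (t - s) ω ∈ B} = P {ω | X (t - s) ω ∈ B} := by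
      refine measure_congr ?_
      filter_upwards [hg] with ω hω
      refine propext ?_
      show (modZ X (t - s) ω ∈ B) ↔ (X (t - s) ω ∈ B)
      rw [modZ_good hω]
    have e3 : P {ω | X t ω - X s ω ∈ B} = P {ω | X (t - s) ω ∈ B} := by
      have := congrArg (fun μ => μ B) (hX.statInc s t hs hst)
      have hd : Measurable fun ω => X t ω - X s ω := (hmX t).sub (hmX s)
      calc P {ω | X t ω - X s ω ∈ B} = Measure.map (fun ω => X t ω - X s ω) P B :=
            (Measure.map_apply hd hB).symm
        _ = Measure.map (X (t - s)) P B := this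
        _ = _ := Measure.map_apply (hmX (t - s)) hB
    have e4 := (Indep_iff _ _ P).1 (hX.indep s t hs hst) {ω | X t ω - X s ω ∈ B} A
      ⟨B, hB, rfl⟩ hA
    rw [e1, e2, ← e3, inter_comm, e4, mul_comm]

lemma IsLevy.trL (hX : IsLevy P F X) {x r : ℝ}
    (h : P ({ω | stopVal X x ω = r} ∩ {ω | hitT X x ω < ⊤}) = P {ω | hitT X x ω < ⊤}) :
    TrL (pathLaw P (modZ X)) x r := by
  have := hX.isProb
  have hn := hX.nice
  have hg := hX.good
  refine ae_all_iff.2 fun w => ?_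
  by_cases hw : (w : ℝ) < x
  swap
  · exact Eventually.of_forall fun p hc => absurd hc hw
  simp only [hw, forall_const]
  set G : Set (ℚ≥0 → ℝ) := {p | ovV w p < x ∨ ovV w p = r ∨ ovV w p = ⊤} with hG
  have hGm : MeasurableSet G := by
    have hv := ovV_measurable (w : ℝ)
    exact (hv measurableSet_Iio).union ((hv (measurableSet_singleton _)).union
      (hv (measurableSet_singleton _)))
  refine (ae_map_iff hn.path_meas.aemeasurable hGm).2 ?_
  set D : Set Ω := (fun ω => rp fun t => modZ X t ω) ⁻¹' Gᶜ with hD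
  have hDm : MeasurableSet D := hn.path_meas hGm.compl
  show P D = 0
  set Bs : Set Ω := {ω | hitT X x ω < ⊤} with hB
  have key : ∀ ω, (IsCadlag (fun t => X t ω) ∧ X 0 ω = 0) → ω ∈ D →
      ω ∈ Bs ∧ stopVal X x ω ≠ r := by
    intro ω hω hd
    have hd' : ¬ (ovV w (rp fun t => modZ X t ω) < x ∨ ovV w (rp fun t => modZ X t ω) = r ∨
      ovV w (rp fun t => modZ X t ω) = ⊤) := hd
    simp only [modZ_good hω] at hd'
    push Not at hd'
    obtain ⟨h1, h2, h3⟩ := hd'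
    obtain ⟨h4, h5⟩ := T_eq_of_ge hω.1 hw h1 h3
    refine ⟨h4, fun hc => h2 ?_⟩
    rw [← h5, hc]
  have h1 : P ({ω | stopVal X x ω = r} ∩ Bs) ≤ P (Bs \ D) := by
    refine measure_mono_ae ?_
    filter_upwards [hg] with ω hω hm
    exact ⟨hm.2, fun hd => (key ω hω hd).2 hm.1⟩
  have h2 := measure_inter_add_sdiff (μ := P) Bs hDm
  rw [h] at h1
  have h3 : P (Bs ∩ D) = 0 := by
    have hfin : P (Bs \ D) ≠ ⊤ := measure_ne_top _ _
    have : P (Bs ∩ D) + P (Bs \ D) ≤ 0 + P (Bs \ D) := by rw [h2, zero_add]; exact h1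
    exact nonpos_iff_eq_zero.1 ((ENNReal.add_le_add_iff_right hfin).1 this)
  refine measure_mono_null_ae ?_ h3
  filter_upwards [hg] with ω hω hd
  exact ⟨(key ω hω hd).1, hd⟩

end Final

/-- If for some `x > 0` the position `X(T_x)` is `P`-trivial on `{T_x < ∞}`, then the
exceptional sets may be chosen uniformly in the level: off a single `P`-null set,
`X(T_x) = g(x)` on `{T_x < ∞}` and `X(T̂_x) = ĝ(x)` on `{T̂_x < ∞}`, for all `x` at once. -/
theorem uniform_null_set_for_overshoots {Ω : Type*} {m0 : MeasurableSpace Ω}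
    (P : Measure Ω) (F : MeasureTheory.Filtration ℝ m0) (X : ℝ → Ω → ℝ)
    (hX : IsLevy P F X)
    (htriv : ∃ x : ℝ, 0 < x ∧ ∃ r : ℝ,
      P ({ω | stopVal X x ω = r} ∩ {ω | hitT X x ω < ⊤}) = P {ω | hitT X x ω < ⊤}) :
    ∃ (g ghat : ℝ → ℝ) (N : Set Ω), P N = 0 ∧
      ∀ ω ∉ N, ∀ x : ℝ,
        (hitT X x ω < ⊤ → stopVal X x ω = g x) ∧
        (hitThat X x ω < ⊤ → stopValHat X x ω = ghat x) := by
  obtain ⟨x, hx, r, hr⟩ := htriv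
  have hn := hX.nice
  have hg := hX.good
  rcases hn.main hx (hX.trL hr) with h | ⟨m, hm, h⟩
  · refine ⟨fun x => max x 0, fun x => max x 0, _, hg.and h, fun ω hω => ?_⟩
    have hω' := not_not.1 hω
    obtain ⟨h1, h2⟩ := hω'
    simp only [modZ_good h1] at h2
    exact final_creep h1.1 h1.2 h2
  · refine ⟨fun x => if x ≤ 0 then 0 else m * ⌈x / m⌉,
      fun x => if x < 0 then 0 else m * (⌊x / m⌋ + 1), _, hg.and h, fun ω hω => ?_⟩
    have hω' := not_not.1 hω
    obtain ⟨h1, h2⟩ := hω'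
    simp only [modZ_good h1] at h2
    exact final_lattice h1.1 h1.2 hm h2
end

section
/- Let X be a real-valued Lévy process on a filtered probability space satisfying the usual conditions. If 0 is regular for (0,∞), i.e. P(T̂_0 = 0) = 1, then for each x ∈ ℝ one has T_x = T̂_x P-almost surely. -/
open MeasureTheory ProbabilityTheory Filter Set
open scoped ENNReal Topology

lemma aux_rect {Ω : Type*} {m0 : MeasurableSpace Ω}
    {P : Measure Ω} {F : MeasureTheory.Filtration ℝ m0} {X : ℝ → Ω → ℝ}
    (hX : IsLevy P F X) {t h : ℝ} (ht : 0 ≤ t) (hh : 0 ≤ h) {E : Set Ω}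
    (hE : MeasurableSet[F t] E) (C : ℕ → Set ℝ) (hC : ∀ i, MeasurableSet (C i)) (N : ℕ) :
    MeasurableSet[F (t + N * h)]
      (E ∩ {ω | ∀ i < N, X (t + (i + 1 : ℕ) * h) ω - X (t + i * h) ω ∈ C i}) ∧
    P (E ∩ {ω | ∀ i < N, X (t + (i + 1 : ℕ) * h) ω - X (t + i * h) ω ∈ C i}) =
      P E * ∏ i ∈ Finset.range N, (P.map (X h)) (C i) := by
  induction N with
  | zero =>
    have h0 : t + ((0 : ℕ) : ℝ) * h = t := by simp
    rw [h0]
    simpa using hE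
  | succ N ih =>
    obtain ⟨ih1, ih2⟩ := ih
    have hN : 0 ≤ t + N * h := by positivity
    have hle : t + N * h ≤ t + (N + 1 : ℕ) * h := by push_cast; nlinarith
    have heq : (E ∩ {ω | ∀ i < N + 1, X (t + (i + 1 : ℕ) * h) ω - X (t + i * h) ω ∈ C i}) =
        (fun ω => X (t + (N + 1 : ℕ) * h) ω - X (t + N * h) ω) ⁻¹' (C N) ∩
        (E ∩ {ω | ∀ i < N, X (t + (i + 1 : ℕ) * h) ω - X (t + i * h) ω ∈ C i}) := by
      ext ω
      simp only [Set.mem_inter_iff, Set.mem_ofPred_eq, Set.mem_preimage, Nat.forall_lt_succ_right]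
      tauto
    have hm1 : Measurable[F (t + (N + 1 : ℕ) * h)]
        (fun ω => X (t + (N + 1 : ℕ) * h) ω - X (t + N * h) ω) :=
      Measurable.sub (hX.adapted _) ((hX.adapted _).mono (F.mono hle) le_rfl)
    rw [heq]
    refine ⟨?_, ?_⟩
    · exact MeasurableSet.inter (hm1 (hC N)) (F.mono hle _ ih1)
    · rw [(Indep_iff _ _ _).1 (hX.indep _ _ hN hle) _ _ ⟨C N, hC N, rfl⟩ ih1, ih2,
        Finset.prod_range_succ]
      have h1 := hX.statInc _ _ hN hle
      have h2 : t + ((N + 1 : ℕ) : ℝ) * h - (t + N * h) = h := by push_cast; ring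
      rw [h2] at h1
      rw [← Measure.map_apply (hm1.mono (F.le _) le_rfl) (hC N), h1]
      ring

lemma aux_law {Ω : Type*} {m0 : MeasurableSpace Ω}
    {P : Measure Ω} {F : MeasureTheory.Filtration ℝ m0} {X : ℝ → Ω → ℝ}
    (hX : IsLevy P F X) {t h : ℝ} (ht : 0 ≤ t) (hh : 0 ≤ h) {E : Set Ω}
    (hE : MeasurableSet[F t] E) {C : Set (ℕ → ℝ)} (hC : MeasurableSet C) :
    P (E ∩ {ω | (fun i : ℕ => X (t + (i + 1 : ℕ) * h) ω - X (t + i * h) ω) ∈ C}) =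
      P E * haveI := hX.isProb
            haveI : IsProbabilityMeasure (P.map (X h)) :=
              Measure.isProbabilityMeasure_map
                (((hX.adapted h).mono (F.le h) le_rfl).aemeasurable)
            Measure.infinitePi (fun _ : ℕ => P.map (X h)) C := by
  haveI := hX.isProb
  haveI : IsProbabilityMeasure (P.map (X h)) :=
    Measure.isProbabilityMeasure_map (((hX.adapted h).mono (F.le h) le_rfl).aemeasurable)
  have hXm : ∀ t, Measurable (X t) := fun t => (hX.adapted t).mono (F.le t) le_rfl
  have hE' : MeasurableSet E := F.le _ _ hE
  by_cases h0 : P E = 0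
  · rw [h0, zero_mul]
    exact measure_mono_null Set.inter_subset_left h0
  have hYm : Measurable
      (fun ω => (fun i : ℕ => X (t + (i + 1 : ℕ) * h) ω - X (t + i * h) ω)) :=
    measurable_pi_lambda _ (fun i => (hXm _).sub (hXm _))
  have key : (ProbabilityTheory.cond P E).map
      (fun ω => (fun i : ℕ => X (t + (i + 1 : ℕ) * h) ω - X (t + i * h) ω)) =
      Measure.infinitePi (fun _ : ℕ => P.map (X h)) := by
    refine Measure.eq_infinitePi _ ?_
    intro s D hD
    rw [Measure.map_apply hYm (MeasurableSet.pi s.countable_toSet (fun i _ => hD i)),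
      cond_apply hE']
    classical
    obtain ⟨N, hN⟩ : ∃ N, s ⊆ Finset.range N := s.exists_nat_subset_range
    have hr := (aux_rect hX ht hh hE (fun i => if i ∈ s then D i else Set.univ)
      (fun i => by split_ifs; exacts [hD i, MeasurableSet.univ]) N).2
    have h1 : {ω | ∀ i < N, X (t + (i + 1 : ℕ) * h) ω - X (t + i * h) ω ∈
        (if i ∈ s then D i else Set.univ)} =
        (fun ω => (fun i : ℕ => X (t + (i + 1 : ℕ) * h) ω - X (t + i * h) ω)) ⁻¹'
          (Set.pi s D) := by
      ext ω
      simp only [Set.mem_ofPred_eq, Set.mem_preimage, Set.mem_pi, Finset.mem_coe]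
      constructor
      · intro H i hi
        have := H i (Finset.mem_range.1 (hN hi))
        rwa [if_pos hi] at this
      · intro H i _
        split_ifs with hi
        · exact H i hi
        · trivial
    rw [h1] at hr
    rw [hr, ← mul_assoc, ENNReal.inv_mul_cancel h0 (measure_ne_top _ _), one_mul,
      ← Finset.prod_subset hN]
    · exact Finset.prod_congr rfl (fun i hi => by rw [if_pos hi])
    · intro i _ hi
      rw [if_neg hi]; exact measure_univ
  rw [← key, Measure.map_apply hYm hC, cond_apply hE', ← mul_assoc,
    ENNReal.mul_inv_cancel h0 (measure_ne_top _ _), one_mul]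
  rfl

lemma aux_shift {Ω : Type*} {m0 : MeasurableSpace Ω}
    {P : Measure Ω} {F : MeasureTheory.Filtration ℝ m0} {X : ℝ → Ω → ℝ}
    (hX : IsLevy P F X) {t h : ℝ} (ht : 0 ≤ t) (hh : 0 ≤ h) {E : Set Ω}
    (hE : MeasurableSet[F t] E) (ε : ℝ) (N : ℕ) :
    P (E ∩ {ω | ∀ i ≤ N, X (t + i * h) ω - X t ω ≤ ε}) =
      P E * P {ω | ∀ i ≤ N, X (i * h) ω - X 0 ω ≤ ε} := by
  haveI := hX.isProb
  have hC : MeasurableSet {v : ℕ → ℝ | ∀ i ≤ N, ∑ j ∈ Finset.range i, v j ≤ ε} := by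
    have : {v : ℕ → ℝ | ∀ i ≤ N, ∑ j ∈ Finset.range i, v j ≤ ε} =
      ⋂ i, ⋂ (_ : i ≤ N), {v : ℕ → ℝ | ∑ j ∈ Finset.range i, v j ≤ ε} := by
      ext; simp
    rw [this]
    refine MeasurableSet.iInter fun i => MeasurableSet.iInter fun _ => ?_
    exact measurableSet_le (by fun_prop) measurable_const
  have hs : ∀ u : ℝ, {ω | (fun i : ℕ => X (u + (i + 1 : ℕ) * h) ω - X (u + i * h) ω) ∈
      {v : ℕ → ℝ | ∀ i ≤ N, ∑ j ∈ Finset.range i, v j ≤ ε}} =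
      {ω | ∀ i ≤ N, X (u + i * h) ω - X u ω ≤ ε} := by
    intro u
    ext ω
    simp only [Set.mem_ofPred_eq]
    refine forall₂_congr fun i _ => ?_
    rw [Finset.sum_range_sub (fun i : ℕ => X (u + i * h) ω)]
    simp
  have h1 := aux_law hX ht hh hE hC
  have h2 := aux_law hX le_rfl hh (E := Set.univ) (@MeasurableSet.univ _ (F 0)) hC
  rw [hs] at h1 h2
  simp only [Set.univ_inter, measure_univ, one_mul, zero_add] at h2
  rw [h1, h2]

lemma aux_dyadic {f : ℝ → ℝ} (hf : IsCadlag f) {r t y : ℝ} (ht : 0 ≤ t) (htr : t < r)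
    (hy : y < f t) : ∃ k : ℕ, ∃ j : ℕ, j < 2 ^ k ∧ y < f (j * (r / 2 ^ k)) := by
  have hr : 0 < r := ht.trans_lt htr
  have h1 : ∀ᶠ s in 𝓝[Set.Ici t] t, y < f s := (hf.1 t ht).eventually (lt_mem_nhds hy)
  obtain ⟨u, hu, hu2⟩ := (mem_nhdsGE_iff_exists_Ico_subset' (lt_add_one t)).1 h1
  have hη : 0 < min u r - t := by
    have : t < min u r := lt_min hu htr
    linarith
  obtain ⟨k, hk⟩ := exists_pow_lt_of_lt_one (div_pos hη hr) (show (1/2 : ℝ) < 1 by norm_num)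
  have hk' : r / 2 ^ k < min u r - t := by
    rw [lt_div_iff₀ hr] at hk
    calc r / 2 ^ k = (1/2) ^ k * r := by rw [one_div, inv_pow]; field_simp
      _ < _ := hk
  set d := r / 2 ^ k with hd
  have hdpos : 0 < d := by positivity
  have a1 : t ≤ ⌈t / d⌉₊ * d := (div_le_iff₀ hdpos).1 (Nat.le_ceil _)
  have a2 : ⌈t / d⌉₊ * d < t + d := by
    have := Nat.ceil_lt_add_one (div_nonneg ht hdpos.le)
    calc _ < (t / d + 1) * d := by gcongr
      _ = t + d := by field_simp
  have a3 : ⌈t / d⌉₊ * d < min u r := by linarith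
  refine ⟨k, ⌈t / d⌉₊, ?_, ?_⟩
  · have : (⌈t / d⌉₊ : ℝ) * d < 2 ^ k * d := by
      have : (2:ℝ) ^ k * d = r := by rw [hd]; field_simp
      rw [this]; exact a3.trans_le (min_le_right _ _)
    have := lt_of_mul_lt_mul_right this hdpos.le
    exact_mod_cast this
  · exact hu2 ⟨a1, a3.trans_le (min_le_left _ _)⟩

lemma aux_B_null {Ω : Type*} {m0 : MeasurableSpace Ω}
    {P : Measure Ω} {F : MeasureTheory.Filtration ℝ m0} {X : ℝ → Ω → ℝ}
    (hX : IsLevy P F X) (hreg : P {ω | hitThat X 0 ω = 0} = 1) {δ : ℝ} (hδ : 0 < δ) :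
    Tendsto (fun n : ℕ => P {ω | ∀ i ≤ 2 ^ n, X ((i : ℕ) * (δ / 2 ^ n)) ω - X 0 ω ≤
      1 / ((n : ℝ) + 1)}) atTop (𝓝 0) := by
  haveI := hX.isProb
  have hXm : ∀ t, Measurable (X t) := fun t => (hX.adapted t).mono (F.le t) le_rfl
  set B : ℕ → Set Ω := fun n => {ω | ∀ i ≤ 2 ^ n, X ((i : ℕ) * (δ / 2 ^ n)) ω - X 0 ω ≤
      1 / ((n : ℝ) + 1)} with hB
  have hBm : ∀ n, MeasurableSet (B n) := by
    intro n
    have : B n = ⋂ i : ℕ, ⋂ (_ : i ≤ 2 ^ n),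
        {ω | X ((i : ℕ) * (δ / 2 ^ n)) ω - X 0 ω ≤ 1 / ((n : ℝ) + 1)} := by
      ext; simp [hB]
    rw [this]
    refine MeasurableSet.iInter fun i => MeasurableSet.iInter fun _ => ?_
    exact measurableSet_le ((hXm _).sub (hXm _)) measurable_const
  have hBa : Antitone B := by
    refine antitone_nat_of_succ_le fun n ω hω i hi => ?_
    have h1 := hω (2 * i) (by rw [pow_succ]; omega)
    have h2 : ((2 * i : ℕ) : ℝ) * (δ / 2 ^ (n + 1)) = i * (δ / 2 ^ n) := by
      push_cast; rw [pow_succ]; field_simp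
    rw [h2] at h1
    refine h1.trans ?_
    apply one_div_le_one_div_of_le (by positivity)
    push_cast; linarith
  have hlim := tendsto_measure_iInter_atTop (μ := P) (s := B)
    (fun i => (hBm i).nullMeasurableSet) hBa ⟨0, measure_ne_top _ _⟩
  have hz : P (⋂ n, B n) = 0 := by
    have hKm : MeasurableSet (⋂ n, B n) := MeasurableSet.iInter hBm
    rw [← compl_compl (⋂ n, B n), prob_compl_eq_zero_iff hKm.compl]
    refine le_antisymm prob_le_one ?_
    rw [← hreg]
    refine measure_mono_ae ?_
    have hst : ∀ᵐ ω ∂P, X 0 ω = 0 := by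
      exact (mem_ae_iff_prob_eq_one (measurableSet_eq_fun (hXm 0) measurable_const)).2 hX.start
    filter_upwards [hX.cadlag, hst] with ω hc h0
    intro hT hK
    have hT : hitThat X 0 ω = 0 := hT
    have hlt : hitThat X 0 ω < ENNReal.ofReal δ := by rw [hT]; simpa using hδ
    obtain ⟨_, ⟨t, ⟨ht0, ht⟩, rfl⟩, htδ⟩ := sInf_lt_iff.1 hlt
    have htδ : t < δ := (ENNReal.ofReal_lt_ofReal_iff hδ).1 htδ
    obtain ⟨k, j, hj, hpos⟩ := aux_dyadic hc ht0 htδ ht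
    have hK : ∀ n, ω ∈ B n := Set.mem_iInter.1 hK
    obtain ⟨n, hn⟩ := exists_nat_one_div_lt hpos
    have h1 := hK (n + k) (j * 2 ^ n) (by rw [pow_add, mul_comm]; gcongr)
    have h2 : ((j * 2 ^ n : ℕ) : ℝ) * (δ / 2 ^ (n + k)) = j * (δ / 2 ^ k) := by
      push_cast; rw [pow_add]; field_simp
    rw [h2, h0, sub_zero] at h1
    have h3 : 1 / (((n + k : ℕ) : ℝ) + 1) ≤ 1 / ((n : ℝ) + 1) := by
      apply one_div_le_one_div_of_le (by positivity)
      push_cast; linarith [(Nat.cast_nonneg k : (0:ℝ) ≤ k)]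
    linarith
  rw [hz] at hlim
  exact hlim

lemma aux_first {Ω : Type*} {m0 : MeasurableSpace Ω}
    {P : Measure Ω} {F : MeasureTheory.Filtration ℝ m0} {X : ℝ → Ω → ℝ}
    (hX : IsLevy P F X) {h d : ℝ} (hh : 0 ≤ h) (hd : 0 ≤ d) (y ε : ℝ) (N M : ℕ) :
    P {ω | ∃ j < M, y < X (j * d) ω ∧ (∀ l < j, X (l * d) ω ≤ y) ∧
        ∀ i ≤ N, X (j * d + i * h) ω - X (j * d) ω ≤ ε} ≤
      P {ω | ∀ i ≤ N, X (i * h) ω - X 0 ω ≤ ε} := by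
  haveI := hX.isProb
  set E : ℕ → Set Ω := fun j => {ω | y < X (j * d) ω ∧ ∀ l < j, X (l * d) ω ≤ y} with hEdef
  have hEm : ∀ j : ℕ, MeasurableSet[F (j * d)] (E j) := by
    intro j
    have : E j = {ω | y < X (j * d) ω} ∩
        ⋂ l : ℕ, ⋂ (_ : l < j), {ω | X (l * d) ω ≤ y} := by
      ext; simp [hEdef]
    rw [this]
    refine MeasurableSet.inter (hX.adapted _ measurableSet_Ioi) ?_
    refine MeasurableSet.iInter fun l => MeasurableSet.iInter fun hl => ?_
    have hle : (l : ℝ) * d ≤ j * d := by gcongr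
    exact F.mono hle _ (hX.adapted _ measurableSet_Iic)
  have hdisj : Pairwise (Function.onFun Disjoint E) := by
    intro a b hab
    rw [Function.onFun, Set.disjoint_left]
    rintro ω ⟨ha1, ha2⟩ ⟨hb1, hb2⟩
    rcases lt_or_gt_of_ne hab with h | h
    · exact absurd (hb2 a h) (not_le.2 ha1)
    · exact absurd (ha2 b h) (not_le.2 hb1)
  calc _ ≤ P (⋃ j ∈ Finset.range M,
        (E j ∩ {ω | ∀ i ≤ N, X (j * d + i * h) ω - X (j * d) ω ≤ ε})) := by
        refine measure_mono ?_
        rintro ω ⟨j, hj, h1, h2, h3⟩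
        simp only [Set.mem_iUnion]
        exact ⟨j, Finset.mem_range.2 hj, ⟨h1, h2⟩, h3⟩
    _ ≤ ∑ j ∈ Finset.range M,
        P (E j ∩ {ω | ∀ i ≤ N, X (j * d + i * h) ω - X (j * d) ω ≤ ε}) :=
        measure_biUnion_finset_le _ _
    _ = (∑ j ∈ Finset.range M, P (E j)) * P {ω | ∀ i ≤ N, X (i * h) ω - X 0 ω ≤ ε} := by
        rw [Finset.sum_mul]
        exact Finset.sum_congr rfl fun j _ => aux_shift hX (by positivity) hh (hEm j) ε N
    _ ≤ 1 * P {ω | ∀ i ≤ N, X (i * h) ω - X 0 ω ≤ ε} := by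
        gcongr
        rw [← measure_univ (μ := P)]
        refine sum_measure_le_measure_univ
          (fun i _ => ((F.le _ _ (hEm i)) : MeasurableSet (E i)).nullMeasurableSet) ?_
        intro a _ b _ hab
        exact (hdisj hab).aedisjoint
    _ = _ := one_mul _

lemma aux_null {Ω : Type*} {m0 : MeasurableSpace Ω}
    {P : Measure Ω} {F : MeasureTheory.Filtration ℝ m0} {X : ℝ → Ω → ℝ}
    (hX : IsLevy P F X) (hreg : P {ω | hitThat X 0 ω = 0} = 1) (x : ℝ) {r q : ℝ}
    (hr : 0 ≤ r) (hrq : r < q) :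
    P {ω | IsCadlag (fun t => X t ω) ∧ (∃ t, 0 ≤ t ∧ t < r ∧ x ≤ X t ω) ∧
      ∀ s, 0 ≤ s → s < q → X s ω ≤ x} = 0 := by
  have hδ : 0 < q - r := sub_pos.2 hrq
  refine le_antisymm (ge_of_tendsto' (aux_B_null hX hreg hδ) fun n => ?_) zero_le
  set A : Set Ω := {ω | IsCadlag (fun t => X t ω) ∧ (∃ t, 0 ≤ t ∧ t < r ∧ x ≤ X t ω) ∧
      ∀ s, 0 ≤ s → s < q → X s ω ≤ x} with hA
  have hε : (0:ℝ) < 1 / ((n:ℝ) + 1) := by positivity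
  set ε : ℝ := 1 / ((n:ℝ) + 1)
  set H : ℕ → Set Ω := fun k => A ∩ {ω | ∃ j : ℕ, j < 2 ^ k ∧ x - ε < X (j * (r / 2 ^ k)) ω}
    with hH
  have hmono : Monotone H := by
    refine monotone_nat_of_le_succ fun k => ?_
    rintro ω ⟨hω, j, hj, hjx⟩
    refine ⟨hω, 2 * j, by rw [pow_succ]; omega, ?_⟩
    have h2 : ((2 * j : ℕ) : ℝ) * (r / 2 ^ (k + 1)) = j * (r / 2 ^ k) := by
      push_cast; rw [pow_succ]; field_simp
    rwa [h2]
  have hsub : A ⊆ ⋃ k, H k := by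
    rintro ω hω
    obtain ⟨hc, ⟨t, ht0, htr, htx⟩, hs⟩ := hω
    obtain ⟨k, hk⟩ := aux_dyadic hc ht0 htr (show x - ε < X t ω by linarith)
    exact Set.mem_iUnion.2 ⟨k, ⟨hc, ⟨t, ht0, htr, htx⟩, hs⟩, hk⟩
  refine (measure_mono hsub).trans ?_
  rw [hmono.measure_iUnion]
  refine iSup_le fun k => ?_
  refine (measure_mono ?_).trans (aux_first hX (h := (q - r) / 2 ^ n) (d := r / 2 ^ k)
    (by positivity) (by positivity) (x - ε) ε (2 ^ n) (2 ^ k))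
  rintro ω ⟨⟨hc, ⟨t, ht0, htr, htx⟩, hs⟩, hex⟩
  classical
  have hf := Nat.find_spec hex
  have hmin := fun l => Nat.find_min hex (m := l)
  set j := Nat.find hex
  refine ⟨j, hf.1, hf.2, fun l hl => ?_, fun i hi => ?_⟩
  · by_contra hcon
    exact hmin l hl ⟨hl.trans hf.1, not_le.1 hcon⟩
  · have hrpos : 0 < r := ht0.trans_lt htr
    have b1 : (j : ℝ) * (r / 2 ^ k) < r := by
      have : (j : ℝ) < 2 ^ k := by exact_mod_cast hf.1
      calc (j : ℝ) * (r / 2 ^ k) < 2 ^ k * (r / 2 ^ k) := by gcongr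
        _ = r := by field_simp
    have b2 : (i : ℝ) * ((q - r) / 2 ^ n) ≤ q - r := by
      have : (i : ℝ) ≤ 2 ^ n := by exact_mod_cast hi
      calc (i : ℝ) * ((q - r) / 2 ^ n) ≤ 2 ^ n * ((q - r) / 2 ^ n) := by gcongr
        _ = q - r := by field_simp
    have := hs (j * (r / 2 ^ k) + i * ((q - r) / 2 ^ n)) (by positivity) (by linarith)
    linarith [hf.2]

/-- If `0` is regular for `(0,∞)`, i.e. `P(T̂_0 = 0) = 1`, then for each `x ∈ ℝ`,
`T_x = T̂_x` `P`-a.s. -/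
theorem hitT_eq_hitThat_of_regular {Ω : Type*} {m0 : MeasurableSpace Ω}
    (P : Measure Ω) (F : MeasureTheory.Filtration ℝ m0) (X : ℝ → Ω → ℝ)
    (hX : IsLevy P F X)
    (hreg : P {ω | hitThat X 0 ω = 0} = 1) :
    ∀ x : ℝ, ∀ᵐ ω ∂P, hitT X x ω = hitThat X x ω := by
  intro x
  have hall : ∀ᵐ ω ∂P, ∀ r q : ℚ, 0 ≤ r → r < q →
      ¬ (IsCadlag (fun t => X t ω) ∧ (∃ t, 0 ≤ t ∧ t < (r : ℝ) ∧ x ≤ X t ω) ∧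
      ∀ s, 0 ≤ s → s < (q : ℝ) → X s ω ≤ x) := by
    rw [ae_all_iff]; intro r
    rw [ae_all_iff]; intro q
    by_cases hr : 0 ≤ r
    · by_cases hrq : r < q
      · have := aux_null hX hreg x (r := r) (q := q) (by exact_mod_cast hr)
          (by exact_mod_cast hrq)
        filter_upwards [measure_eq_zero_iff_ae_notMem.1 this] with ω hω _ _
        exact hω
      · exact Eventually.of_forall fun ω _ h => absurd h hrq
    · exact Eventually.of_forall fun ω h => absurd h hr
  filter_upwards [hX.cadlag, hall] with ω hc hω
  apply le_antisymm
  · apply sInf_le_sInf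
    apply Set.image_mono
    rintro t ⟨h1, h2⟩
    exact ⟨h1, h2.le⟩
  · by_contra hlt
    rw [not_le] at hlt
    obtain ⟨q, hq0, hq1, hq2⟩ := ENNReal.lt_iff_exists_rat_btwn.1 hlt
    obtain ⟨r, hr0, hr1, hr2⟩ := ENNReal.lt_iff_exists_rat_btwn.1 hq1
    have hrq : (r : ℝ) < q :=
      (Real.toNNReal_lt_toNNReal_iff_of_nonneg (by exact_mod_cast hr0)).1
        (by exact_mod_cast hr2)
    refine hω r q hr0 (by exact_mod_cast hrq) ⟨hc, ?_, ?_⟩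
    · obtain ⟨_, ⟨t, ⟨ht0, ht⟩, rfl⟩, htr⟩ := sInf_lt_iff.1 hr1
      refine ⟨t, ht0, ?_, ht⟩
      exact (ENNReal.ofReal_lt_ofReal_iff_of_nonneg ht0).1 htr
    · intro s hs0 hsq
      by_contra hcon
      have h1 : hitThat X x ω ≤ ENNReal.ofReal s :=
        sInf_le ⟨s, ⟨hs0, not_le.1 hcon⟩, rfl⟩
      have h2 : ENNReal.ofReal s ≤ ENNReal.ofReal q := ENNReal.ofReal_le_ofReal hsq.le
      exact absurd hq2 (not_lt.2 (h1.trans h2))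
end

section
/- Let (Ω, 𝓕, P) be a complete probability space, 𝒢 ⊆ 𝓕 a sub-σ-algebra, and let Y : (Ω,𝓕) → (S,𝒮) and Z : (Ω,𝓕) → (T,𝒯) be random elements into measurable spaces such that σ(Y) ⊆ 𝒢 and σ(Z) is independent of 𝒢 under P. Let f : S × T → ℝ be bounded and measurable with respect to the completion of 𝒮⊗𝒯 relative to the law P_{(Y,Z)} of (Y,Z). Then: (i) (Y,Z) is measurable from (Ω,𝓕) to (S×T, completion of 𝒮⊗𝒯 under P_{(Y,Z)}); (ii) for P_Y-almost every y ∈ S, the map ω ↦ f(y, Z(ω)) is 𝓕-measurable; (iii) the map y ↦ E[f(y, Z)] (defined to be 0 on the P_Y-null set where ω ↦ f(y,Z(ω)) fails to be 𝓕-measurable) is measurable with respect to the completion of 𝒮 under P_Y; and P-almost surely, E[f(Y, Z) | 𝒢] = (y ↦ E[f(y, Z)]) ∘ Y. -/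
open MeasureTheory ProbabilityTheory Filter Set
open scoped ENNReal Topology

theorem condexp_indep_aux {Ω S T : Type*} (G : MeasurableSpace Ω) {mΩ : MeasurableSpace Ω}
    {mS : MeasurableSpace S} {mT : MeasurableSpace T}
    (P : Measure Ω) [IsProbabilityMeasure P] (hPc : P.IsComplete)
    (hG : G ≤ mΩ)
    (Y : Ω → S) (Z : Ω → T)
    (hYm : Measurable[mΩ] Y) (hZm : Measurable[mΩ] Z)
    (hYG : MeasurableSpace.comap Y mS ≤ G)
    (hZG : ProbabilityTheory.Indep (MeasurableSpace.comap Z mT) G P)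
    (f : S × T → ℝ) (C : ℝ) (hbdd : ∀ p : S × T, |f p| ≤ C)
    (hf : NullMeasurable f (@Measure.map Ω (S × T) mΩ _ (fun ω => (Y ω, Z ω)) P)) :
    (∀ B : Set (S × T),
        NullMeasurableSet B (@Measure.map Ω (S × T) mΩ _ (fun ω => (Y ω, Z ω)) P) →
        MeasurableSet[mΩ] ((fun ω => (Y ω, Z ω)) ⁻¹' B)) ∧
    (∀ᵐ y ∂(@Measure.map Ω S mΩ mS Y P), Measurable[mΩ] fun ω => f (y, Z ω)) ∧
    NullMeasurable (fun y : S => ∫ ω, f (y, Z ω) ∂P) (@Measure.map Ω S mΩ mS Y P) ∧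
    P[fun ω => f (Y ω, Z ω)|G] =ᵐ[P] fun ω => ∫ ω', f (Y ω, Z ω') ∂P := by
  have hYZ : Measurable (fun ω => (Y ω, Z ω)) := hYm.prodMk hZm
  have hYGm : Measurable[G] Y := measurable_iff_comap_le.2 hYG
  have key : ∀ s : Set Ω, MeasurableSet[G] s →
      (P.restrict s).map (fun ω => (Y ω, Z ω)) = ((P.restrict s).map Y).prod (P.map Z) := by
    intro s hs
    have := Measure.isProbabilityMeasure_map (μ := P) hZm.aemeasurable
    symm
    refine Measure.prod_eq fun A B hA hB => ?_
    rw [Measure.map_apply hYZ (hA.prod hB), Measure.map_apply hYm hA, Measure.map_apply hZm hB,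
      Measure.restrict_apply (hYZ (hA.prod hB)), Measure.restrict_apply (hYm hA)]
    have h1 : (fun ω => (Y ω, Z ω)) ⁻¹' (A ×ˢ B) ∩ s = Z ⁻¹' B ∩ (Y ⁻¹' A ∩ s) := by
      ext ω
      simp only [mem_inter_iff, mem_preimage, mem_prod]
      tauto
    rw [h1, mul_comm]
    exact (Indep_iff _ _ P).1 hZG _ _ ⟨B, hB, rfl⟩ ((hYGm hA).inter hs)
  have hprod : P.map (fun ω => (Y ω, Z ω)) = (P.map Y).prod (P.map Z) := by
    simpa using key univ MeasurableSet.univ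
  have pZ := Measure.isProbabilityMeasure_map (μ := P) hZm.aemeasurable
  have pY := Measure.isProbabilityMeasure_map (μ := P) hYm.aemeasurable
  obtain ⟨g, hg, hfg⟩ := hf.aemeasurable
  have hfgP : (fun ω => f (Y ω, Z ω)) =ᵐ[P] fun ω => g (Y ω, Z ω) :=
    ae_of_ae_map hYZ.aemeasurable hfg
  have hfgY : ∀ᵐ y ∂(P.map Y), (fun ω => f (y, Z ω)) =ᵐ[P] fun ω => g (y, Z ω) := by
    rw [hprod] at hfg
    filter_upwards [Measure.ae_ae_of_ae_prod hfg] with y hy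
    exact ae_of_ae_map hZm.aemeasurable hy
  have hgi : Integrable (fun ω => g (Y ω, Z ω)) P := by
    refine Integrable.of_bound (hg.comp hYZ).aestronglyMeasurable C ?_
    filter_upwards [hfgP] with ω hω
    rw [← hω]
    exact hbdd _
  have hh : StronglyMeasurable (fun y => ∫ z, g (y, z) ∂(P.map Z)) :=
    hg.stronglyMeasurable.integral_prod_right'
  have hint : ∀ y, ∫ ω, g (y, Z ω) ∂P = ∫ z, g (y, z) ∂(P.map Z) := fun y =>
    (integral_map hZm.aemeasurable
      (hg.comp measurable_prodMk_left).aestronglyMeasurable).symm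
  have heq : ∀ᵐ y ∂(P.map Y), ∫ ω, f (y, Z ω) ∂P = ∫ z, g (y, z) ∂(P.map Z) := by
    filter_upwards [hfgY] with y hy
    rw [integral_congr_ae hy, hint]
  refine ⟨fun B hB => ?_, ?_, ?_, ?_⟩
  · exact (hB.preimage ⟨hYZ, Measure.AbsolutelyContinuous.rfl⟩).measurable_of_complete
  · filter_upwards [hfgY] with y hy
    exact ((hg.comp (measurable_prodMk_left.comp hZm)).nullMeasurable.congr
      hy.symm).measurable_of_complete
  · exact hh.measurable.nullMeasurable.congr (heq.mono fun y hy => hy.symm)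
  · have hgi' : Integrable g ((P.map Y).prod (P.map Z)) := by
      rw [← hprod]
      exact (integrable_map_measure hg.aestronglyMeasurable hYZ.aemeasurable).2 hgi
    have hhi : Integrable (fun ω => ∫ z, g (Y ω, z) ∂(P.map Z)) P :=
      (integrable_map_measure hh.aestronglyMeasurable hYm.aemeasurable).1
        hgi'.integral_prod_left
    have hE : (fun ω => ∫ z, g (Y ω, z) ∂(P.map Z)) =ᵐ[P] P[fun ω => g (Y ω, Z ω)|G] := by
      refine ae_eq_condExp_of_forall_setIntegral_eq hG hgi (fun s _ _ => hhi.integrableOn) ?_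
        (hh.comp_measurable hYGm).aestronglyMeasurable
      intro s hs _
      have e1 : ∫ ω in s, (∫ z, g (Y ω, z) ∂(P.map Z)) ∂P =
          ∫ y, (∫ z, g (y, z) ∂(P.map Z)) ∂((P.restrict s).map Y) :=
        (integral_map hYm.aemeasurable hh.aestronglyMeasurable).symm
      have e2 : ∫ ω in s, g (Y ω, Z ω) ∂P =
          ∫ p, g p ∂((P.restrict s).map (fun ω => (Y ω, Z ω))) :=
        (integral_map hYZ.aemeasurable hg.aestronglyMeasurable).symm
      have hi : Integrable g (((P.restrict s).map Y).prod (P.map Z)) := by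
        rw [← key s hs]
        exact (integrable_map_measure hg.aestronglyMeasurable hYZ.aemeasurable).2 hgi.integrableOn
      rw [e1, e2, key s hs, integral_prod _ hi]
    filter_upwards [condExp_congr_ae (m := G) hfgP, hE,
      ae_of_ae_map hYm.aemeasurable heq] with ω h1 h2 h3
    rw [h1, ← h2, h3]

/-- Lemma on conditioning with completions: on a complete probability space, if
`σ(Y) ⊆ 𝒢`, `σ(Z) ⟂ 𝒢` and `f` is bounded and measurable w.r.t. the completion of
`𝒮 ⊗ 𝒯` under the law of `(Y,Z)`, then (i) `(Y,Z)` is measurable into that completion,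
(ii) for `P_Y`-a.e. `y`, `ω ↦ f(y,Z(ω))` is measurable, (iii) `y ↦ E[f(y,Z)]` is
measurable w.r.t. the `P_Y`-completion, and `E[f(Y,Z) | 𝒢] = (y ↦ E[f(y,Z)]) ∘ Y` a.s.
(the value of `E[f(y,Z)]` on the `P_Y`-null set where measurability fails being an
irrelevant junk value). -/
theorem condexp_indep_eval_completion {Ω S T : Type*} {mΩ : MeasurableSpace Ω}
    {mS : MeasurableSpace S} {mT : MeasurableSpace T}
    (P : Measure Ω) [IsProbabilityMeasure P] (hPc : P.IsComplete)
    (G : MeasurableSpace Ω) (hG : G ≤ mΩ)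
    (Y : Ω → S) (Z : Ω → T)
    (hYm : Measurable[mΩ] Y) (hZm : Measurable[mΩ] Z)
    (hYG : MeasurableSpace.comap Y mS ≤ G)
    (hZG : ProbabilityTheory.Indep (MeasurableSpace.comap Z mT) G P)
    (f : S × T → ℝ) (C : ℝ) (hbdd : ∀ p : S × T, |f p| ≤ C)
    (hf : NullMeasurable f (@Measure.map Ω (S × T) mΩ _ (fun ω => (Y ω, Z ω)) P)) :
    (∀ B : Set (S × T),
        NullMeasurableSet B (@Measure.map Ω (S × T) mΩ _ (fun ω => (Y ω, Z ω)) P) →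
        MeasurableSet[mΩ] ((fun ω => (Y ω, Z ω)) ⁻¹' B)) ∧
    (∀ᵐ y ∂(@Measure.map Ω S mΩ mS Y P), Measurable[mΩ] fun ω => f (y, Z ω)) ∧
    NullMeasurable (fun y : S => ∫ ω, f (y, Z ω) ∂P) (@Measure.map Ω S mΩ mS Y P) ∧
    P[fun ω => f (Y ω, Z ω)|G] =ᵐ[P] fun ω => ∫ ω', f (Y ω, Z ω') ∂P := by
  exact condexp_indep_aux G P hPc hG Y Z hYm hZm hYG hZG f C hbdd hf
end
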